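/- Suppose 𝒳 is a compact metric space, φ:𝒳²→ℝ is continuous, H=K₂ is a single edge (so v=2), δ_□(W_{Q_n},W)→0 for some W∈𝒲, limsup_{n→∞}‖W_{Q_n}‖₁<∞, and ‖W‖₁<∞. Then both U_n(X) and V_n(X) satisfy a large deviation principle at speed n with the good rate function I₀(t) = inf{ D(ν|ρ) : ν ∈ 𝒯ℳ, D(ν|ρ) < ∞, T_{W,φ}(ν) = t }. -/

import Mathlib

open MeasureTheory Filter Set
open scoped ENNReal NNReal

noncomputable section

/-- The uniform probability measure on `[0,1]`. -/
def unif01 : Measure ℝ := volume.restrict (Set.Icc 0 1)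

instance : IsProbabilityMeasure unif01 :=
  ⟨by rw [unif01, Measure.restrict_apply_univ, Real.volume_Icc]; norm_num⟩

/-- The `L^r` norm (`r : ℝ≥0∞`) of a kernel, viewed as a function on `[0,1]²`. -/
def kerNorm (W : ℝ → ℝ → ℝ) (r : ℝ≥0∞) : ℝ≥0∞ :=
  eLpNorm (fun z : ℝ × ℝ => W z.1 z.2) r (unif01.prod unif01)

/-- The (strong) cut distance `d_□` between two kernels on `[0,1]²`. -/
def cutDist (W₁ W₂ : ℝ → ℝ → ℝ) : ℝ :=
  ⨆ S : {S : Set ℝ // MeasurableSet S}, ⨆ T : {T : Set ℝ // MeasurableSet T},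
    |∫ x in Set.Icc (0:ℝ) 1 ∩ S.1, ∫ y in Set.Icc (0:ℝ) 1 ∩ T.1, (W₁ x y - W₂ x y)|

/-- A Lebesgue-measure-preserving bijection of `[0,1]`. -/
def MPB (σ : ℝ → ℝ) : Prop :=
  Set.BijOn σ (Set.Icc 0 1) (Set.Icc 0 1) ∧ MeasurePreserving σ unif01 unif01

/-- The weak cut distance `δ_□`. -/
def weakCutDist (W₁ W₂ : ℝ → ℝ → ℝ) : ℝ :=
  ⨅ σ : {σ : ℝ → ℝ // MPB σ}, cutDist (fun x y => W₁ (σ.1 x) (σ.1 y)) W₂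

/-- The step kernel `W_{Q_n}` associated to an `n × n` matrix `Q`:
it equals `Q i j` when `⌈n x⌉ = i, ⌈n y⌉ = j`. -/
def stepKernel (n : ℕ) (Q : Fin n → Fin n → ℝ) : ℝ → ℝ → ℝ := fun x y =>
  ∑ i : Fin n, ∑ j : Fin n,
    if x ∈ Set.Ioc (((i : ℕ) : ℝ)/n) ((((i : ℕ) : ℝ)+1)/n) ∧
       y ∈ Set.Ioc (((j : ℕ) : ℝ)/n) ((((j : ℕ) : ℝ)+1)/n)
    then Q i j else 0

/-- Product over the edges of `H` (each edge counted once) of `f a b`. -/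
def edgeProd {v : ℕ} (G : SimpleGraph (Fin v)) [DecidableRel G.Adj]
    (f : Fin v → Fin v → ℝ) : ℝ :=
  ∏ p ∈ Finset.univ.filter (fun p : Fin v × Fin v => G.Adj p.1 p.2 ∧ p.1 < p.2), f p.1 p.2

/-- The number of edges `|E(H)|`. -/
def edgeCard {v : ℕ} (G : SimpleGraph (Fin v)) [DecidableRel G.Adj] : ℕ :=
  (Finset.univ.filter (fun p : Fin v × Fin v => G.Adj p.1 p.2 ∧ p.1 < p.2)).card

/-- The inhomogeneous U-statistic `U_n(X)` (sum over distinct indices). -/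
def Ustat {X : Type*} {v : ℕ} (G : SimpleGraph (Fin v)) [DecidableRel G.Adj]
    (φ : (Fin v → X) → ℝ) (n : ℕ) (Q : Fin n → Fin n → ℝ) (x : Fin n → X) : ℝ :=
  (∑ i ∈ Finset.univ.filter (fun i : Fin v → Fin n => Function.Injective i),
      φ (x ∘ i) * edgeProd G (fun a b => Q (i a) (i b))) / (n : ℝ) ^ v

/-- The inhomogeneous V-statistic `V_n(X)` (sum over all indices). -/
def Vstat {X : Type*} {v : ℕ} (G : SimpleGraph (Fin v)) [DecidableRel G.Adj]
    (φ : (Fin v → X) → ℝ) (n : ℕ) (Q : Fin n → Fin n → ℝ) (x : Fin n → X) : ℝ :=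
  (∑ i : Fin v → Fin n, φ (x ∘ i) * edgeProd G (fun a b => Q (i a) (i b))) / (n : ℝ) ^ v

open Classical in
/-- Kullback-Leibler divergence `D(ν | ρ) ∈ [0,∞]`. -/
def KLdiv {α : Type*} [MeasurableSpace α] (ν ρ : Measure α) : ℝ≥0∞ :=
  if ν ≪ ρ ∧ Integrable (llr ν ρ) ν then ENNReal.ofReal (∫ a, llr ν ρ a ∂ν) else ⊤

open Classical in
/-- `ν` itself if it is a probability measure, junk value `0` otherwise. -/
def probOr {α : Type*} [MeasurableSpace α] (ν : Measure α) : Measure α :=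
  if IsProbabilityMeasure ν then ν else 0

instance {α : Type*} [MeasurableSpace α] (ν : Measure α) : SigmaFinite (probOr ν) := by
  unfold probOr
  split_ifs with h
  · haveI := h; infer_instance
  · infer_instance

/-- `v`-fold product of a (probability) measure. -/
def piProb {α : Type*} [MeasurableSpace α] (v : ℕ) (ν : Measure α) : Measure (Fin v → α) :=
  Measure.pi fun _ => probOr ν

/-- The functional `T_{W,φ}(ν) = E[φ(B₁,…,B_v) ∏_{(a,b) ∈ E(H)} W(A_a,A_b)]`
for `(A_a,B_a)` i.i.d. with law `ν`. -/
def TWphi {X : Type*} [MeasurableSpace X] {v : ℕ} (G : SimpleGraph (Fin v))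
    [DecidableRel G.Adj] (W : ℝ → ℝ → ℝ) (φ : (Fin v → X) → ℝ)
    (ν : Measure (ℝ × X)) : ℝ :=
  ∫ z : Fin v → ℝ × X,
    φ (fun a => (z a).2) * edgeProd G (fun a b => W (z a).1 (z b).1) ∂(piProb v ν)

/-- Membership in `𝒯ℳ`: probability measures on `[0,1] × 𝒳` whose first marginal
is uniform on `[0,1]`. -/
def inTM {X : Type*} [MeasurableSpace X] (ν : Measure (ℝ × X)) : Prop :=
  IsProbabilityMeasure ν ∧ ν.map Prod.fst = unif01

/-- The rate function `I₀(t) = inf { D(ν|ρ) : ν ∈ 𝒯ℳ, D(ν|ρ) < ∞, T_{W,φ}(ν) = t }`. -/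
def rate0 {X : Type*} [MeasurableSpace X] {v : ℕ} (G : SimpleGraph (Fin v))
    [DecidableRel G.Adj] (W : ℝ → ℝ → ℝ) (φ : (Fin v → X) → ℝ) (μ : Measure X)
    (t : ℝ) : ℝ≥0∞ :=
  ⨅ ν : {ν : Measure (ℝ × X) //
      inTM ν ∧ KLdiv ν (unif01.prod μ) ≠ ⊤ ∧ TWphi G W φ ν = t},
    KLdiv ν.1 (unif01.prod μ)

/-- Tail assumption (T): `E_μ[e^{λ ψ(X)^p}] < ∞` for all `λ > 0`; for `p = ∞`
it means `ψ` is bounded. -/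
def TailCond {X : Type*} [MeasurableSpace X] (μ : Measure X) (ψ : X → ℝ)
    (p : ℝ≥0∞) : Prop :=
  if p = ⊤ then ∃ C : ℝ, ∀ x, ψ x ≤ C
  else ∀ lam : ℝ, 0 < lam →
    ∫⁻ x, ENNReal.ofReal (Real.exp (lam * ψ x ^ p.toReal)) ∂μ < ⊤

/-- A sequence of random elements `T n` defined on probability spaces `(Ω n, P n)`,
taking values in a topological space `E`, satisfies a large deviation principle at
speed `n` with good rate function `I`. -/
def SatisfiesLDP {E : Type*} [TopologicalSpace E] {Ω : ℕ → Type*}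
    [∀ n, MeasurableSpace (Ω n)] (P : ∀ n, Measure (Ω n)) (T : ∀ n, Ω n → E)
    (I : E → ℝ≥0∞) : Prop :=
  (∀ c : ℝ≥0∞, c ≠ ⊤ → IsCompact {x | I x ≤ c}) ∧
  ∀ F : Set E, MeasurableSet[borel E] F →
    (-(⨅ x ∈ interior F, (I x : EReal)) ≤
      Filter.atTop.liminf fun n : ℕ =>
        (((n : ℝ)⁻¹ : ℝ) : EReal) * ENNReal.log (P n {ω | T n ω ∈ F})) ∧
    (Filter.atTop.limsup (fun n : ℕ =>
        (((n : ℝ)⁻¹ : ℝ) : EReal) * ENNReal.log (P n {ω | T n ω ∈ F})) ≤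
      -(⨅ x ∈ closure F, (I x : EReal)))

end

/-!
Moving the cells of the step kernel of `Qₙ` by a near-optimal measure-preserving map turns weak cut
convergence into cut convergence of kernels constant on the products of an equipartition of `[0, 1]`
into `n` cells. Spreading the index `i` over its cell, the statistic is the edge functional of this
kernel at the empirical law of the sample. By Stone–Weierstrass, `φ` is a uniform limit of sums of
products `f(y) g(y')`, and for such weights the edge functional is controlled by the cut norm,
uniformly over laws; the `L¹` bound absorbs the error. Hence the statistic is uniformly close to the
edge functional of `W` at the empirical law, and that functional is weakly continuous on `𝒯ℳ`.

It remains to prove a Sanov bound in each direction. Relative entropy is the supremum of the affine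
functionals `ν ↦ ∫ f dν - ∫ (exp f - 1) dρ`, whose exponential moments at the empirical law are at
most `1` by Jensen's inequality on each cell; with the compactness of `𝒯ℳ`, Markov's inequality for
finitely many `f` gives the upper bound. For the lower bound, sample `Xᵢ` from the conditional law
of `ν` given the `i`-th cell: typical samples then have full probability in the limit, while the
relative entropy with respect to `μ^n` is at most `n D(ν|ρ)`.
-/

open ProbabilityTheory InformationTheory
open scoped Topology BoundedContinuousFunction Function

namespace EdgeLDP

section KLDuality

variable {α : Type*} [MeasurableSpace α] {ν ρ : Measure α}

/-- The affine functional `ν ↦ ∫ f dν - ∫ (exp f - 1) dρ`. Since `exp - 1` is the convex conjugate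
of `klFun`, its supremum over bounded `f` is `klDiv ν ρ`; this is the Donsker-Varadhan formula in
the form that is linear in `exp f`. -/
noncomputable def klDual (ρ : Measure α) (f : α → ℝ) (ν : Measure α) : ℝ :=
  ∫ x, f x ∂ν - ∫ x, (Real.exp (f x) - 1) ∂ρ

lemma mul_sub_exp_sub_one_le_klFun {h : ℝ} (hh : 0 ≤ h) (t : ℝ) :
    h * t - (Real.exp t - 1) ≤ klFun h := by
  rcases hh.eq_or_lt with rfl | hpos
  · simpa [klFun] using (Real.exp_pos t).le
  · have htangent := mul_le_mul_of_nonneg_left (Real.add_one_le_exp (t - Real.log h)) hh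
    rw [Real.exp_sub, Real.exp_log hpos, mul_div_cancel₀ _ hpos.ne'] at htangent
    rw [klFun]
    linarith

lemma mul_log_sub_nonneg {h t : ℝ} (ht : 0 < t) (hht : h ≤ t ∧ t ≤ 1 ∨ 1 ≤ t ∧ t ≤ h) :
    0 ≤ h * Real.log t - (t - 1) := by
  have hcmp : t * Real.log t ≤ h * Real.log t := by
    rcases hht with ⟨hle, ht1⟩ | ⟨ht1, hle⟩
    · exact mul_le_mul_of_nonpos_right hle (Real.log_nonpos ht.le ht1)
    · exact mul_le_mul_of_nonneg_right hle (Real.log_nonneg ht1)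
  have hklFun : 0 ≤ t * Real.log t + 1 - t := klFun_nonneg ht.le
  linarith

lemma abs_exp_sub_exp_le {a b M : ℝ} (ha : a ≤ M) (hb : b ≤ M) :
    |Real.exp a - Real.exp b| ≤ Real.exp M * |a - b| :=
  (convex_Iic M).norm_image_sub_le_of_norm_deriv_le (fun x _ => Real.differentiableAt_exp)
    (fun x hx => by
      rw [Real.deriv_exp, Real.norm_of_nonneg (Real.exp_pos x).le]
      exact Real.exp_le_exp.2 hx) hb ha

variable [IsFiniteMeasure ν]

lemma absolutelyContinuous_of_forall_klDual_le {c : ℝ}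
    (h : ∀ f : α → ℝ, Measurable f → ∀ M, (∀ x, |f x| ≤ M) → klDual ρ f ν ≤ c) : ν ≪ ρ := by
  refine Measure.AbsolutelyContinuous.mk fun A hA hρA => ?_
  by_contra hνA
  have hpos : 0 < ν.real A := ENNReal.toReal_pos hνA (measure_ne_top ν A)
  have hexp (L : ℝ) : ∫ x, (Real.exp (A.indicator (fun _ => L) x) - 1) ∂ρ = 0 := by
    refine integral_eq_zero_of_ae ?_
    filter_upwards [measure_eq_zero_iff_ae_notMem.1 hρA] with x hx
    simp [hx]
  have hbound (L : ℝ) : L * ν.real A ≤ c := by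
    have := h (A.indicator fun _ => L) (measurable_const.indicator hA) |L|
      fun x => by by_cases hx : x ∈ A <;> simp [hx]
    rwa [klDual, hexp, sub_zero, integral_indicator_const L hA, smul_eq_mul, mul_comm] at this
  have := hbound ((c + 1) / ν.real A)
  rw [div_mul_cancel₀ _ hpos.ne'] at this
  linarith

variable [IsFiniteMeasure ρ]

lemma integrable_exp_of_abs_le {f : α → ℝ} (hf : Measurable f) {M : ℝ} (hM : ∀ x, |f x| ≤ M) :
    Integrable (fun x => Real.exp (f x)) ρ :=
  .of_bound hf.exp.aestronglyMeasurable (Real.exp M) <| .of_forall fun x => by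
    rw [Real.norm_of_nonneg (Real.exp_pos _).le]
    exact Real.exp_le_exp.2 ((le_abs_self _).trans (hM x))

lemma klDual_eq_integral_rnDeriv (hac : ν ≪ ρ) {f : α → ℝ} (hf : Measurable f) {M : ℝ}
    (hM : ∀ x, |f x| ≤ M) :
    Integrable (fun x => (ν.rnDeriv ρ x).toReal * f x - (Real.exp (f x) - 1)) ρ ∧
      klDual ρ f ν = ∫ x, ((ν.rnDeriv ρ x).toReal * f x - (Real.exp (f x) - 1)) ∂ρ := by
  have hlin : Integrable (fun x => (ν.rnDeriv ρ x).toReal * f x) ρ :=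
    Measure.integrable_toReal_rnDeriv.mul_bdd (c := M) hf.aestronglyMeasurable (.of_forall hM)
  have hexp : Integrable (fun x => Real.exp (f x) - 1) ρ :=
    (integrable_exp_of_abs_le hf hM).sub (integrable_const 1)
  refine ⟨hlin.sub hexp, ?_⟩
  rw [klDual, integral_sub hlin hexp, ← integral_rnDeriv_smul hac]
  rfl

lemma klDual_le_toReal_klDiv (h : klDiv ν ρ ≠ ∞) {f : α → ℝ} (hf : Measurable f) {M : ℝ}
    (hM : ∀ x, |f x| ≤ M) : klDual ρ f ν ≤ (klDiv ν ρ).toReal := by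
  obtain ⟨hac, hint⟩ := klDiv_ne_top_iff.1 h
  obtain ⟨hdual, heq⟩ := klDual_eq_integral_rnDeriv hac hf hM
  rw [heq, toReal_klDiv_eq_integral_klFun hac]
  exact integral_mono hdual ((integrable_klFun_rnDeriv_iff hac).2 hint)
    fun x => mul_sub_exp_sub_one_le_klFun ENNReal.toReal_nonneg _

lemma abs_klDual_sub_le {f g : α → ℝ} (hf : Measurable f) (hg : Measurable g) {M : ℝ}
    (hfM : ∀ x, |f x| ≤ M) (hgM : ∀ x, |g x| ≤ M) :
    |klDual ρ f ν - klDual ρ g ν| ≤ (1 + Real.exp M) * ∫ x, |f x - g x| ∂(ν + ρ) := by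
  have hint (m : Measure α) [IsFiniteMeasure m] : Integrable (fun x => f x - g x) m :=
    (Integrable.of_bound hf.aestronglyMeasurable M (.of_forall hfM)).sub
      (.of_bound hg.aestronglyMeasurable M (.of_forall hgM))
  have hlin : |∫ x, f x ∂ν - ∫ x, g x ∂ν| ≤ ∫ x, |f x - g x| ∂ν := by
    rw [← integral_sub (.of_bound hf.aestronglyMeasurable M (.of_forall hfM))
      (.of_bound hg.aestronglyMeasurable M (.of_forall hgM))]
    exact abs_integral_le_integral_abs
  have hexp : |∫ x, (Real.exp (f x) - 1) ∂ρ - ∫ x, (Real.exp (g x) - 1) ∂ρ| ≤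
      Real.exp M * ∫ x, |f x - g x| ∂ρ := by
    have hfe : Integrable (fun x => Real.exp (f x) - 1) ρ :=
      (integrable_exp_of_abs_le hf hfM).sub (integrable_const 1)
    have hge : Integrable (fun x => Real.exp (g x) - 1) ρ :=
      (integrable_exp_of_abs_le hg hgM).sub (integrable_const 1)
    rw [← integral_sub hfe hge, ← integral_const_mul]
    refine abs_integral_le_integral_abs.trans (integral_mono (hfe.sub hge).abs
      ((hint ρ).abs.const_mul _) fun x => ?_)
    simpa only [sub_sub_sub_cancel_right] using
      abs_exp_sub_exp_le ((le_abs_self _).trans (hfM x)) ((le_abs_self _).trans (hgM x))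
  have hν : 0 ≤ ∫ x, |f x - g x| ∂ν := integral_nonneg fun _ => abs_nonneg _
  have hρ : 0 ≤ ∫ x, |f x - g x| ∂ρ := integral_nonneg fun _ => abs_nonneg _
  rw [integral_add_measure (hint ν).abs (hint ρ).abs, klDual, klDual, sub_sub_sub_comm]
  calc _ ≤ ∫ x, |f x - g x| ∂ν + Real.exp M * ∫ x, |f x - g x| ∂ρ :=
        (abs_sub _ _).trans (add_le_add hlin hexp)
    _ ≤ _ := by nlinarith [Real.exp_pos M]

/-- The truncation of `h` to `[exp (-k), exp k]`, the argument of the bounded test functions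
`log h` in the duality formula for the density `h`. -/
noncomputable def expClamp (k : ℕ) (h : ℝ) : ℝ :=
  max (Real.exp (-k)) (min (Real.exp k) h)

lemma expClamp_pos (k : ℕ) (h : ℝ) : 0 < expClamp k h :=
  lt_max_of_lt_left (Real.exp_pos _)

lemma abs_log_expClamp_le (k : ℕ) (h : ℝ) : |Real.log (expClamp k h)| ≤ k := by
  rw [abs_le, Real.le_log_iff_exp_le (expClamp_pos k h), Real.log_le_iff_le_exp (expClamp_pos k h)]
  exact ⟨le_max_left _ _, max_le (Real.exp_le_exp.2 (neg_le_self k.cast_nonneg)) (min_le_left _ _)⟩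

lemma expClamp_between (k : ℕ) (h : ℝ) :
    h ≤ expClamp k h ∧ expClamp k h ≤ 1 ∨ 1 ≤ expClamp k h ∧ expClamp k h ≤ h := by
  have hlow : Real.exp (-k) ≤ 1 := Real.exp_le_one_iff.2 (neg_nonpos.2 k.cast_nonneg)
  have hhigh : 1 ≤ Real.exp k := Real.one_le_exp k.cast_nonneg
  rcases le_total h 1 with h1 | h1
  · left
    rw [expClamp, min_eq_right (h1.trans hhigh)]
    exact ⟨le_max_right _ _, max_le hlow h1⟩
  · right
    have hmin : 1 ≤ min (Real.exp k) h := le_min hhigh h1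
    rw [expClamp, max_eq_right (hlow.trans hmin)]
    exact ⟨hmin, min_le_right _ _⟩

lemma tendsto_expClamp {h : ℝ} (hh : 0 ≤ h) :
    Tendsto (fun k => expClamp k h) atTop (𝓝 h) := by
  have hlow : Tendsto (fun k : ℕ => Real.exp (-k)) atTop (𝓝 0) :=
    Real.tendsto_exp_neg_atTop_nhds_zero.comp tendsto_natCast_atTop_atTop
  have hhigh : Tendsto (fun k : ℕ => min (Real.exp k) h) atTop (𝓝 h) := by
    refine tendsto_const_nhds.congr' ?_
    filter_upwards [(Real.tendsto_exp_atTop.comp tendsto_natCast_atTop_atTop).eventually_ge_atTop h]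
      with k hk using (min_eq_right hk).symm
  simpa only [expClamp, max_eq_right hh] using hlow.max hhigh

lemma tendsto_mul_log_expClamp {h : ℝ} (hh : 0 ≤ h) :
    Tendsto (fun k => h * Real.log (expClamp k h) - (expClamp k h - 1)) atTop (𝓝 (klFun h)) := by
  have hlim := tendsto_expClamp hh
  have hmul : Tendsto (fun k => h * Real.log (expClamp k h)) atTop (𝓝 (h * Real.log h)) := by
    rcases hh.eq_or_lt with rfl | hpos
    · simp
    · exact (hlim.log hpos.ne').const_mul h
  convert hmul.sub (hlim.sub_const 1) using 2
  rw [klFun]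
  ring

lemma klDiv_le_of_forall_klDual_le {c : ℝ}
    (h : ∀ f : α → ℝ, Measurable f → ∀ M, (∀ x, |f x| ≤ M) → klDual ρ f ν ≤ c) :
    klDiv ν ρ ≤ ENNReal.ofReal c := by
  have hac := absolutelyContinuous_of_forall_klDual_le h
  set d : α → ℝ := fun x => (ν.rnDeriv ρ x).toReal
  have hd0 (x) : 0 ≤ d x := ENNReal.toReal_nonneg
  have hlog (k : ℕ) : Measurable fun x => Real.log (expClamp k (d x)) :=
    (measurable_const.max (measurable_const.min
      (Measure.measurable_rnDeriv ν ρ).ennreal_toReal)).log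
  let G (k : ℕ) (x : α) : ℝ := d x * Real.log (expClamp k (d x)) - (expClamp k (d x) - 1)
  have hG (k : ℕ) : ∫⁻ x, ENNReal.ofReal (G k x) ∂ρ ≤ ENNReal.ofReal c := by
    obtain ⟨hint, heq⟩ :=
      klDual_eq_integral_rnDeriv hac (hlog k) fun x => abs_log_expClamp_le k (d x)
    simp only [Real.exp_log (expClamp_pos _ _)] at hint heq
    rw [← ofReal_integral_eq_lintegral_ofReal hint (.of_forall fun x =>
      mul_log_sub_nonneg (expClamp_pos k (d x)) (expClamp_between k (d x))), ← heq]
    exact ENNReal.ofReal_le_ofReal (h _ (hlog k) _ fun x => abs_log_expClamp_le k (d x))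
  have hGm (k : ℕ) : Measurable fun x => ENNReal.ofReal (G k x) := by
    have hdm : Measurable d := (Measure.measurable_rnDeriv ν ρ).ennreal_toReal
    exact ((hdm.mul (hlog k)).sub ((measurable_const.max
      (measurable_const.min hdm)).sub_const 1)).ennreal_ofReal
  calc klDiv ν ρ = ∫⁻ x, liminf (fun k => ENNReal.ofReal (G k x)) atTop ∂ρ := by
        rw [klDiv_eq_lintegral_klFun_of_ac hac]
        exact lintegral_congr fun x => ((ENNReal.continuous_ofReal.tendsto _).comp
          (tendsto_mul_log_expClamp (hd0 x))).liminf_eq.symm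
    _ ≤ liminf (fun k => ∫⁻ x, ENNReal.ofReal (G k x) ∂ρ) atTop := lintegral_liminf_le hGm
    _ ≤ ENNReal.ofReal c := (liminf_le_liminf (.of_forall hG)).trans_eq (liminf_const _)

end KLDuality

section KLDualityTopological

variable {α : Type*} [TopologicalSpace α] [TopologicalSpace.PseudoMetrizableSpace α]
  [MeasurableSpace α] [BorelSpace α]

lemma exists_boundedContinuous_integral_abs_sub_le (m : Measure α) [IsFiniteMeasure m] {f : α → ℝ}
    (hf : Measurable f) {M : ℝ} (hM : ∀ x, |f x| ≤ M) {ε : ℝ} (hε : 0 < ε) :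
    ∃ g : α →ᵇ ℝ, (∀ x, |g x| ≤ M) ∧ ∫ x, |f x - g x| ∂m ≤ ε := by
  have hfint : Integrable f m := .of_bound hf.aestronglyMeasurable M (.of_forall hM)
  obtain ⟨g, hg, hgint⟩ := hfint.exists_boundedContinuous_integral_sub_le hε
  let g' : α →ᵇ ℝ :=
    (g ⊓ BoundedContinuousFunction.const α M) ⊔ BoundedContinuousFunction.const α (-M)
  have hg' (x) : g' x = max (min (g x) M) (-M) := rfl
  refine ⟨g', fun x => abs_le.2 ⟨le_max_right _ _, max_le (min_le_right _ _) ?_⟩,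
    le_trans (integral_mono (hfint.sub (g'.integrable m)).abs (hfint.sub hgint).norm
      fun x => ?_) hg⟩
  · exact neg_le_self ((abs_nonneg _).trans (hM x))
  have hclamp : f x = max (min (f x) M) (-M) := by
    rw [min_eq_left (abs_le.1 (hM x)).2, max_eq_left (abs_le.1 (hM x)).1]
  calc |f x - g' x| = |max (min (f x) M) (-M) - max (min (g x) M) (-M)| := by rw [← hclamp, hg']
    _ ≤ |min (f x) M - min (g x) M| := abs_max_sub_max_le_abs _ _ _
    _ ≤ max |f x - g x| |M - M| := abs_min_sub_min_le_max _ _ _ _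
    _ = ‖f x - g x‖ := by simp

variable {ν ρ : Measure α} [IsFiniteMeasure ν] [IsFiniteMeasure ρ]

lemma klDual_le_of_forall_boundedContinuous {c : ℝ} (h : ∀ f : α →ᵇ ℝ, klDual ρ f ν ≤ c)
    {f : α → ℝ} (hf : Measurable f) {M : ℝ} (hM : ∀ x, |f x| ≤ M) : klDual ρ f ν ≤ c := by
  refine le_of_forall_pos_le_add fun ε hε => ?_
  have hL : 0 < 1 + Real.exp M := by positivity
  obtain ⟨g, hgM, hfg⟩ :=
    exists_boundedContinuous_integral_abs_sub_le (ν + ρ) hf hM (div_pos hε hL)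
  have hsub := abs_klDual_sub_le (ν := ν) (ρ := ρ) hf g.continuous.measurable hM hgM
  calc klDual ρ f ν ≤ klDual ρ g ν + |klDual ρ f ν - klDual ρ g ν| := by
        linarith [le_abs_self (klDual ρ f ν - klDual ρ g ν)]
    _ ≤ c + (1 + Real.exp M) * (ε / (1 + Real.exp M)) :=
        add_le_add (h g) (hsub.trans (by gcongr))
    _ = c + ε := by field_simp

theorem klDiv_le_ofReal_iff_forall_klDual_le {c : ℝ} (hc : 0 ≤ c) :
    klDiv ν ρ ≤ ENNReal.ofReal c ↔ ∀ f : α →ᵇ ℝ, klDual ρ f ν ≤ c := by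
  constructor
  · intro h f
    refine (klDual_le_toReal_klDiv (ne_top_of_le_ne_top ENNReal.ofReal_ne_top h)
      f.continuous.measurable f.norm_coe_le_norm).trans ?_
    exact ENNReal.toReal_le_of_le_ofReal hc h
  · exact fun h => klDiv_le_of_forall_klDual_le fun f hf M hM =>
      klDual_le_of_forall_boundedContinuous h hf hM

end KLDualityTopological

section TensorApproximation

variable {α : Type*}

open scoped TensorProduct in
/-- The algebra homomorphism `f ⊗ g ↦ ((x, y) ↦ f x * g y)`. -/
noncomputable def tensorAlgHom (α : Type*) [TopologicalSpace α] :
    (α →ᵇ ℝ) ⊗[ℝ] (α →ᵇ ℝ) →ₐ[ℝ] C(α × α, ℝ) :=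
  Algebra.TensorProduct.productMap
    ((ContinuousMap.compRightAlgHom ℝ ℝ ⟨Prod.fst, continuous_fst⟩).comp
      (BoundedContinuousFunction.toContinuousMapₐ ℝ))
    ((ContinuousMap.compRightAlgHom ℝ ℝ ⟨Prod.snd, continuous_snd⟩).comp
      (BoundedContinuousFunction.toContinuousMapₐ ℝ))

lemma tensorAlgHom_tmul [TopologicalSpace α] (f g : α →ᵇ ℝ) (z : α × α) :
    tensorAlgHom α (f ⊗ₜ[ℝ] g) z = f z.1 * g z.2 := rfl

variable [MetricSpace α]

lemma exists_boundedContinuous_ne {x y : α} (hxy : x ≠ y) : ∃ f : α →ᵇ ℝ, f x ≠ f y := by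
  let f : α →ᵇ ℝ := .ofNormedAddCommGroup (fun z => min (dist z y) 1) (by fun_prop) 1 fun z => by
    rw [Real.norm_of_nonneg (le_min dist_nonneg zero_le_one)]
    exact min_le_right _ _
  refine ⟨f, ne_of_gt ?_⟩
  change min (dist y y) 1 < min (dist x y) 1
  rw [dist_self, min_eq_left zero_le_one]
  exact lt_min (dist_pos.2 hxy) one_pos

lemma tensorAlgHom_range_separatesPoints : (tensorAlgHom α).range.SeparatesPoints := by
  rintro ⟨x, x'⟩ ⟨y, y'⟩ hxy
  rcases not_and_or.1 fun h : x = y ∧ x' = y' => hxy (Prod.ext h.1 h.2) with h | h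
  · obtain ⟨f, hf⟩ := exists_boundedContinuous_ne h
    exact ⟨_, ⟨_, ⟨f ⊗ₜ 1, rfl⟩, rfl⟩, by simpa [tensorAlgHom_tmul] using hf⟩
  · obtain ⟨f, hf⟩ := exists_boundedContinuous_ne h
    exact ⟨_, ⟨_, ⟨1 ⊗ₜ f, rfl⟩, rfl⟩, by simpa [tensorAlgHom_tmul] using hf⟩

theorem exists_finset_tensor_near {K : Set α} (hK : IsCompact K) {F : α → α → ℝ}
    (hF : Continuous (Function.uncurry F)) {ε : ℝ} (hε : 0 < ε) :
    ∃ S : Finset ((α →ᵇ ℝ) × (α →ᵇ ℝ)),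
      ∀ x ∈ K, ∀ y ∈ K, |F x y - ∑ s ∈ S, s.1 x * s.2 y| ≤ ε := by
  obtain ⟨_, ⟨t, rfl⟩, hg⟩ :=
    ContinuousMap.exists_mem_subalgebra_near_continuous_of_isCompact_of_separatesPoints
      tensorAlgHom_range_separatesPoints ⟨_, hF⟩ (hK.prod hK) hε
  obtain ⟨S, rfl⟩ := TensorProduct.exists_finset t
  refine ⟨S, fun x hx y hy => ?_⟩
  have := (hg (x, y) ⟨hx, hy⟩).le
  rw [norm_sub_rev] at this
  simpa [map_sum, ContinuousMap.sum_apply, tensorAlgHom_tmul] using this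

end TensorApproximation

section CutBound

variable {α β : Type*} [MeasurableSpace α] [MeasurableSpace β] {τ : Measure α} {ν : Measure β}

/-- The cut norm of the kernel `U` with respect to `τ` is at most `κ`. -/
def CutBound (τ : Measure α) (U : α → α → ℝ) (κ : ℝ) : Prop :=
  ∀ S T : Set α, MeasurableSet S → MeasurableSet T → |∫ a in S, ∫ a' in T, U a a' ∂τ ∂τ| ≤ κ

lemma integral_abs_le_two_mul {F : α → ℝ} (hF : Measurable F) (hFint : Integrable F τ) {κ : ℝ}
    (hκ : ∀ S, MeasurableSet S → |∫ a in S, F a ∂τ| ≤ κ) : ∫ a, |F a| ∂τ ≤ 2 * κ := by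
  have hpos := (abs_le.1 (hκ {a | 0 ≤ F a} (measurableSet_le measurable_const hF))).2
  have hneg := (abs_le.1 (hκ {a | F a ≤ 0} (measurableSet_le hF measurable_const))).1
  calc ∫ a, |F a| ∂τ = ∫ a in {a | 0 ≤ F a}, F a ∂τ - ∫ a in {a | F a ≤ 0}, F a ∂τ :=
        integral_norm_eq_pos_sub_neg hFint
    _ ≤ 2 * κ := by linarith

lemma abs_integral_mul_comp_le {p : β → α} (hp : MeasurePreserving p ν τ) {F : α → ℝ}
    (hF : Measurable F) (hFint : Integrable F τ) {κ : ℝ}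
    (hκ : ∀ S, MeasurableSet S → |∫ a in S, F a ∂τ| ≤ κ) {u : β → ℝ} {M : ℝ} (hM : 0 ≤ M)
    (hu : ∀ z, |u z| ≤ M) : |∫ z, u z * F (p z) ∂ν| ≤ M * (2 * κ) := by
  have hFp : Integrable (fun z => M * |F (p z)|) ν :=
    (hp.integrable_comp_of_integrable hFint).abs.const_mul M
  calc |∫ z, u z * F (p z) ∂ν| ≤ ∫ z, M * |F (p z)| ∂ν :=
        norm_integral_le_of_norm_le (f := fun z => u z * F (p z)) hFp <| .of_forall fun z =>
          (abs_mul _ _).trans_le (mul_le_mul_of_nonneg_right (hu z) (abs_nonneg _))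
    _ = M * ∫ a, |F a| ∂τ := by
        rw [integral_const_mul, ← hp.map_eq, integral_map hp.aemeasurable
          hF.abs.aestronglyMeasurable]
    _ ≤ M * (2 * κ) := mul_le_mul_of_nonneg_left (integral_abs_le_two_mul hF hFint hκ) hM

variable [SFinite τ] [SFinite ν]

lemma CutBound.abs_setIntegral_integral_le {U : α → α → ℝ} {κ : ℝ} (hκ : CutBound τ U κ)
    (hU : Measurable (Function.uncurry U)) (hUint : Integrable (Function.uncurry U) (τ.prod τ))
    {p : β → α} (hp : MeasurePreserving p ν τ) {u : β → ℝ} (hu : Measurable u)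
    {M : ℝ} (hM : 0 ≤ M) (huM : ∀ z, |u z| ≤ M) {T : Set α} (hT : MeasurableSet T) :
    |∫ a in T, ∫ z, u z * U (p z) a ∂ν ∂τ| ≤ M * (2 * κ) := by
  have hUT : Integrable (Function.uncurry U) (τ.prod (τ.restrict T)) :=
    hUint.mono_measure (Measure.prod_mono le_rfl Measure.restrict_le_self)
  have hswap : Integrable (fun z : α × β => u z.2 * U (p z.2) z.1) ((τ.restrict T).prod ν) :=
    (((hp.prod (.id _)).integrable_comp_of_integrable hUT).swap).bdd_mul (c := M)
      (hu.comp measurable_snd).aestronglyMeasurable (.of_forall fun z => huM z.2)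
  rw [integral_integral_swap hswap]
  simp only [integral_const_mul]
  exact abs_integral_mul_comp_le hp (F := fun a => ∫ a' in T, U a a' ∂τ)
    hU.stronglyMeasurable.integral_prod_right.measurable hUT.integral_prod_left
    (fun S hS => hκ S T hS hT) hM huM

theorem CutBound.abs_integral_mul_mul_comp_le {U : α → α → ℝ} {κ : ℝ} (hκ : CutBound τ U κ)
    (hU : Measurable (Function.uncurry U)) (hUint : Integrable (Function.uncurry U) (τ.prod τ))
    {p : β → α} (hp : MeasurePreserving p ν τ) {u v : β → ℝ} (hu : Measurable u)
    (hv : Measurable v) {M : ℝ} (hM : 0 ≤ M) (huM : ∀ z, |u z| ≤ M) (hvM : ∀ z, |v z| ≤ M) :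
    |∫ z, u z.1 * v z.2 * U (p z.1) (p z.2) ∂(ν.prod ν)| ≤ 4 * M ^ 2 * κ := by
  have hUp : Integrable (fun z : β × α => u z.1 * U (p z.1) z.2) (ν.prod τ) :=
    ((hp.prod (.id τ)).integrable_comp_of_integrable hUint).bdd_mul (c := M)
      (hu.comp measurable_fst).aestronglyMeasurable (.of_forall fun z => huM z.1)
  have hUpp : Integrable (fun z : β × β => v z.2 * (u z.1 * U (p z.1) (p z.2))) (ν.prod ν) :=
    (((MeasurePreserving.id ν).prod hp).integrable_comp_of_integrable hUp).bdd_mul (c := M)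
      (hv.comp measurable_snd).aestronglyMeasurable (.of_forall fun z => hvM z.2)
  have hUpm : Measurable fun z : β × α => u z.1 * U (p z.1) z.2 :=
    (hu.comp measurable_fst).mul
      (hU.comp ((hp.measurable.comp measurable_fst).prodMk measurable_snd))
  calc |∫ z, u z.1 * v z.2 * U (p z.1) (p z.2) ∂(ν.prod ν)|
      = |∫ z, v z.2 * (u z.1 * U (p z.1) (p z.2)) ∂(ν.prod ν)| := by
        simp only [mul_left_comm, mul_assoc]
    _ = |∫ z', v z' * ∫ z, u z * U (p z) (p z') ∂ν ∂ν| := by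
        rw [integral_prod_symm _ hUpp]
        simp only [integral_const_mul]
    _ ≤ M * (2 * (M * (2 * κ))) :=
        abs_integral_mul_comp_le hp (F := fun a => ∫ z, u z * U (p z) a ∂ν)
          hUpm.stronglyMeasurable.integral_prod_left'.measurable hUp.integral_prod_right
          (fun T hT => hκ.abs_setIntegral_integral_le hU hUint hp hu hM huM hT) hM hvM
    _ = 4 * M ^ 2 * κ := by ring

end CutBound

section EdgeFunctional

variable {A X : Type*} [MeasurableSpace A] [MeasurableSpace X]

/-- The functional `T_{U,ψ}(ν) = E[ψ(B₁, B₂) U(A₁, A₂)]` of the single edge, for `(A₁, B₁)` and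
`(A₂, B₂)` independent with law `ν`. -/
noncomputable def edgeFunctional (U : A → A → ℝ) (ψ : X → X → ℝ) (ν : Measure (A × X)) : ℝ :=
  ∫ p, ψ p.1.2 p.2.2 * U p.1.1 p.2.1 ∂(ν.prod ν)

variable {τ : Measure A} {ν : Measure (A × X)} [SFinite ν] {U V : A → A → ℝ}
  {ψ χ : X → X → ℝ} {C C' : ℝ}

lemma integrable_edgeFunctional (hν : MeasurePreserving Prod.fst ν τ)
    (hU : Integrable (Function.uncurry U) (τ.prod τ)) (hψ : Measurable (Function.uncurry ψ))
    (hC : ∀ x y, |ψ x y| ≤ C) :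
    Integrable (fun p : (A × X) × (A × X) => ψ p.1.2 p.2.2 * U p.1.1 p.2.1) (ν.prod ν) :=
  ((hν.prod hν).integrable_comp_of_integrable hU).bdd_mul (c := C)
    (hψ.comp (measurable_snd.prodMap measurable_snd)).aestronglyMeasurable
    (.of_forall fun p => hC p.1.2 p.2.2)

lemma abs_edgeFunctional_le (hν : MeasurePreserving Prod.fst ν τ)
    (hU : Integrable (Function.uncurry U) (τ.prod τ)) (hC : ∀ x y, |ψ x y| ≤ C) :
    |edgeFunctional U ψ ν| ≤ C * ∫ q, |U q.1 q.2| ∂(τ.prod τ) := by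
  have hpair := hν.prod hν
  have hUint : Integrable (fun p : (A × X) × (A × X) => C * |U p.1.1 p.2.1|) (ν.prod ν) :=
    (hpair.integrable_comp_of_integrable hU).abs.const_mul C
  calc |edgeFunctional U ψ ν| ≤ ∫ p, C * |U p.1.1 p.2.1| ∂(ν.prod ν) := by
        rw [edgeFunctional, ← Real.norm_eq_abs]
        refine norm_integral_le_of_norm_le hUint (.of_forall fun p => ?_)
        rw [norm_mul]
        exact mul_le_mul_of_nonneg_right (hC _ _) (abs_nonneg _)
    _ = C * ∫ q, |U q.1 q.2| ∂(τ.prod τ) := by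
        rw [integral_const_mul, ← hpair.map_eq, integral_map hpair.aemeasurable]
        · rfl
        · rw [hpair.map_eq]
          exact hU.abs.aestronglyMeasurable

lemma edgeFunctional_sub_kernel (hν : MeasurePreserving Prod.fst ν τ)
    (hU : Integrable (Function.uncurry U) (τ.prod τ))
    (hV : Integrable (Function.uncurry V) (τ.prod τ)) (hψ : Measurable (Function.uncurry ψ))
    (hC : ∀ x y, |ψ x y| ≤ C) :
    edgeFunctional (fun a b => U a b - V a b) ψ ν =
      edgeFunctional U ψ ν - edgeFunctional V ψ ν := by
  simp only [edgeFunctional, mul_sub]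
  exact integral_sub (integrable_edgeFunctional hν hU hψ hC)
    (integrable_edgeFunctional hν hV hψ hC)

lemma edgeFunctional_sub_weight (hν : MeasurePreserving Prod.fst ν τ)
    (hU : Integrable (Function.uncurry U) (τ.prod τ)) (hψ : Measurable (Function.uncurry ψ))
    (hC : ∀ x y, |ψ x y| ≤ C) (hχ : Measurable (Function.uncurry χ))
    (hC' : ∀ x y, |χ x y| ≤ C') :
    edgeFunctional U (fun x y => ψ x y - χ x y) ν =
      edgeFunctional U ψ ν - edgeFunctional U χ ν := by
  simp only [edgeFunctional, sub_mul]
  exact integral_sub (integrable_edgeFunctional hν hU hψ hC)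
    (integrable_edgeFunctional hν hU hχ hC')

end EdgeFunctional

section CutContinuity

lemma exists_forall_abs_le_of_continuous {X : Type*} [TopologicalSpace X] [CompactSpace X]
    {ψ : X → X → ℝ} (hψ : Continuous (Function.uncurry ψ)) : ∃ C, ∀ x y, |ψ x y| ≤ C := by
  obtain ⟨C, hC⟩ := isCompact_univ.exists_bound_of_continuousOn hψ.continuousOn
  exact ⟨C, fun x y => hC (x, y) trivial⟩

variable {A X : Type*} [MeasurableSpace A] [MeasurableSpace X] {τ : Measure A} [SFinite τ]

lemma CutBound.abs_edgeFunctional_tensor_le [TopologicalSpace X] [BorelSpace X]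
    {U : A → A → ℝ} {κ : ℝ} (hκ : CutBound τ U κ) (hU : Measurable (Function.uncurry U))
    (hUint : Integrable (Function.uncurry U) (τ.prod τ)) {ν : Measure (A × X)} [SFinite ν]
    (hν : MeasurePreserving Prod.fst ν τ)
    (S : Finset ((X →ᵇ ℝ) × (X →ᵇ ℝ))) :
    |edgeFunctional U (fun x y => ∑ s ∈ S, s.1 x * s.2 y) ν| ≤
      (∑ s ∈ S, 4 * max ‖s.1‖ ‖s.2‖ ^ 2) * κ := by
  have hint (s : (X →ᵇ ℝ) × (X →ᵇ ℝ)) : Integrable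
      (fun p : (A × X) × (A × X) => s.1 p.1.2 * s.2 p.2.2 * U p.1.1 p.2.1) (ν.prod ν) := by
    refine integrable_edgeFunctional (ψ := fun x y => s.1 x * s.2 y) (C := ‖s.1‖ * ‖s.2‖) hν hUint
      ((s.1.continuous.measurable.comp measurable_fst).mul
        (s.2.continuous.measurable.comp measurable_snd)) fun x y => ?_
    rw [abs_mul]
    exact mul_le_mul (s.1.norm_coe_le_norm x) (s.2.norm_coe_le_norm y) (abs_nonneg _)
      (norm_nonneg _)
  simp only [edgeFunctional, Finset.sum_mul]
  rw [integral_finsetSum _ fun s _ => hint s]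
  refine (Finset.abs_sum_le_sum_abs _ _).trans (Finset.sum_le_sum fun s _ => ?_)
  exact hκ.abs_integral_mul_mul_comp_le hU hUint hν (s.1.continuous.measurable.comp measurable_snd)
    (s.2.continuous.measurable.comp measurable_snd) (le_max_of_le_left (norm_nonneg _))
    (fun z => (s.1.norm_coe_le_norm z.2).trans (le_max_left _ _))
    fun z => (s.2.norm_coe_le_norm z.2).trans (le_max_right _ _)

theorem exists_abs_edgeFunctional_le_of_cutBound [MetricSpace X] [CompactSpace X] [BorelSpace X]
    {ψ : X → X → ℝ} (hψ : Continuous (Function.uncurry ψ)) {L : ℝ} (hL : 0 ≤ L) {ε : ℝ}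
    (hε : 0 < ε) :
    ∃ κ > 0, ∀ U : A → A → ℝ, Measurable (Function.uncurry U) →
      Integrable (Function.uncurry U) (τ.prod τ) → ∫ q, |U q.1 q.2| ∂(τ.prod τ) ≤ L →
      CutBound τ U κ → ∀ (ν : Measure (A × X)) [SFinite ν], MeasurePreserving Prod.fst ν τ →
      |edgeFunctional U ψ ν| ≤ ε := by
  have hη : 0 < ε / (2 * (L + 1)) := by positivity
  obtain ⟨S, hS⟩ := exists_finset_tensor_near isCompact_univ hψ hη
  obtain ⟨C, hC⟩ := exists_forall_abs_le_of_continuous hψ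
  set χ : X → X → ℝ := fun x y => ∑ s ∈ S, s.1 x * s.2 y
  have hχ : Continuous (Function.uncurry χ) := continuous_finsetSum _ fun s _ =>
    (s.1.continuous.comp continuous_fst).mul (s.2.continuous.comp continuous_snd)
  obtain ⟨C', hC'⟩ := exists_forall_abs_le_of_continuous hχ
  set N : ℝ := ∑ s ∈ S, 4 * max ‖s.1‖ ‖s.2‖ ^ 2
  have hN : 0 ≤ N := Finset.sum_nonneg fun s _ => by positivity
  refine ⟨ε / (2 * (N + 1)), by positivity, fun U hU hUint hUL hκ ν _ hν => ?_⟩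
  have hnear : |edgeFunctional U (fun x y => ψ x y - χ x y) ν| ≤ ε / (2 * (L + 1)) * L :=
    (abs_edgeFunctional_le hν hUint fun x y => hS x trivial y trivial).trans (by gcongr)
  have htensor : |edgeFunctional U χ ν| ≤ N * (ε / (2 * (N + 1))) :=
    hκ.abs_edgeFunctional_tensor_le hU hUint hν S
  have hsmall {b : ℝ} (hb : 0 ≤ b) : b * (ε / (2 * (b + 1))) ≤ ε / 2 := by
    rw [← mul_div_assoc, div_le_div_iff₀ (by positivity) two_pos]
    nlinarith
  rw [edgeFunctional_sub_weight hν hUint hψ.measurable hC hχ.measurable hC'] at hnear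
  calc |edgeFunctional U ψ ν|
      ≤ |edgeFunctional U ψ ν - edgeFunctional U χ ν| + |edgeFunctional U χ ν| := by
        simpa using abs_add_le (edgeFunctional U ψ ν - edgeFunctional U χ ν) (edgeFunctional U χ ν)
    _ ≤ ε / 2 + ε / 2 := add_le_add (hnear.trans (mul_comm _ L ▸ hsmall hL))
        (htensor.trans (hsmall hN))
    _ = ε := add_halves ε

end CutContinuity

section Equipartition

variable {A X : Type*} [MeasurableSpace A] [MeasurableSpace X] {n : ℕ}

/-- The sets `C i` split `τ`, up to a null set, into `n` disjoint pieces of mass `1 / n`. -/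
structure IsEquipartition (τ : Measure A) (C : Fin n → Set A) : Prop where
  measurableSet : ∀ i, MeasurableSet (C i)
  measure_eq : ∀ i, τ (C i) = (n : ℝ≥0∞)⁻¹
  pairwise_disjoint : Pairwise (Disjoint on C)
  ae_mem : ∀ᵐ a ∂τ, a ∈ ⋃ i, C i

/-- The step kernel with value `Q i j` on `C i ×ˢ C j`. -/
noncomputable def cellKernel (Q : Fin n → Fin n → ℝ) (C : Fin n → Set A) (a b : A) : ℝ :=
  ∑ i, ∑ j, Q i j * ((C i).indicator 1 a * (C j).indicator 1 b)

/-- The law obtained by drawing the first coordinate from `τ` and then, on the cell `C i`, the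
second one from `m i`. -/
noncomputable def cellMixture (τ : Measure A) (C : Fin n → Set A) (m : Fin n → Measure X) :
    Measure (A × X) :=
  ∑ i, (τ.restrict (C i)).prod (m i)

/-- The empirical measure of the sample `x`, the index `i` being spread over the cell `C i`. -/
noncomputable abbrev empiricalLaw (τ : Measure A) (C : Fin n → Set A) (x : Fin n → X) :
    Measure (A × X) :=
  cellMixture τ C fun i => Measure.dirac (x i)

/-- The conditional law of the second coordinate given that the first one lies in `S`. -/
noncomputable def cellLaw (ν : Measure (A × X)) (S : Set A) : Measure X :=
  (ν[|Prod.fst ⁻¹' S]).map Prod.snd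

variable {τ : Measure A} {C : Fin n → Set A} {Q : Fin n → Fin n → ℝ}

lemma measurable_cellKernel (hC : ∀ i, MeasurableSet (C i)) :
    Measurable (Function.uncurry (cellKernel Q C)) := by
  unfold Function.uncurry cellKernel
  refine Finset.measurable_fun_sum _ fun i _ => Finset.measurable_fun_sum _ fun j _ => ?_
  exact (((measurable_one.indicator (hC i)).comp measurable_fst).mul
    ((measurable_one.indicator (hC j)).comp measurable_snd)).const_mul _

lemma integrable_cellKernel [IsFiniteMeasure τ] (hC : ∀ i, MeasurableSet (C i)) :
    Integrable (Function.uncurry (cellKernel Q C)) (τ.prod τ) := by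
  unfold Function.uncurry cellKernel
  refine integrable_finsetSum _ fun i _ => integrable_finsetSum _ fun j _ => ?_
  exact (((integrable_const (1 : ℝ)).indicator (hC i)).mul_prod
    ((integrable_const (1 : ℝ)).indicator (hC j))).const_mul _

lemma IsEquipartition.sum_restrict (hC : IsEquipartition τ C) : ∑ i, τ.restrict (C i) = τ := by
  rw [← Measure.sum_fintype, ← Measure.restrict_iUnion hC.pairwise_disjoint hC.measurableSet]
  exact Measure.restrict_eq_self_of_ae_mem hC.ae_mem

lemma IsEquipartition.preimage {B : Type*} [MeasurableSpace B] {τ' : Measure B} {σ : B → A}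
    (hC : IsEquipartition τ C) (hσ : MeasurePreserving σ τ' τ) :
    IsEquipartition τ' fun i => σ ⁻¹' C i where
  measurableSet i := hσ.measurable (hC.measurableSet i)
  measure_eq i := by
    rw [hσ.measure_preimage (hC.measurableSet i).nullMeasurableSet, hC.measure_eq]
  pairwise_disjoint i j hij := (hC.pairwise_disjoint hij).preimage σ
  ae_mem := by simpa only [mem_iUnion, mem_preimage] using hσ.quasiMeasurePreserving.ae hC.ae_mem

lemma IsEquipartition.measurePreserving_fst_cellMixture [SFinite τ] (hC : IsEquipartition τ C)
    (m : Fin n → Measure X) [∀ i, IsProbabilityMeasure (m i)] :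
    MeasurePreserving Prod.fst (cellMixture τ C m) τ := by
  refine ⟨measurable_fst, ?_⟩
  rw [cellMixture, ← Measure.sum_fintype, Measure.map_sum measurable_fst.aemeasurable,
    Measure.sum_fintype]
  simpa only [Measure.map_fst_prod, measure_univ, one_smul] using hC.sum_restrict

lemma IsEquipartition.isProbabilityMeasure_cellMixture [IsProbabilityMeasure τ]
    (hC : IsEquipartition τ C) (m : Fin n → Measure X) [∀ i, IsProbabilityMeasure (m i)] :
    IsProbabilityMeasure (cellMixture τ C m) := by
  have : IsProbabilityMeasure ((cellMixture τ C m).map Prod.fst) := by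
    rwa [(hC.measurePreserving_fst_cellMixture m).map_eq]
  exact Measure.isProbabilityMeasure_of_map Prod.fst

lemma IsEquipartition.cellLaw_cellMixture [SFinite τ] (hC : IsEquipartition τ C)
    (m : Fin n → Measure X) [∀ i, IsProbabilityMeasure (m i)] (i : Fin n) :
    cellLaw (cellMixture τ C m) (C i) = m i := by
  have hn : (n : ℝ≥0∞) ≠ 0 := Nat.cast_ne_zero.2 (Fin.pos i).ne'
  ext B hB
  rw [cellLaw, Measure.map_apply measurable_snd hB,
    cond_apply (measurable_fst (hC.measurableSet i)),
    (hC.measurePreserving_fst_cellMixture m).measure_preimage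
      (hC.measurableSet i).nullMeasurableSet, hC.measure_eq, inv_inv, ← Set.prod_eq, cellMixture,
    Measure.finsetSum_apply, Finset.sum_eq_single i]
  · rw [Measure.prod_prod, Measure.restrict_apply_self, hC.measure_eq, ← mul_assoc,
      ENNReal.mul_inv_cancel hn (ENNReal.natCast_ne_top n), one_mul]
  · intro j _ hj
    rw [Measure.prod_prod, Measure.restrict_apply (hC.measurableSet i),
      (hC.pairwise_disjoint hj.symm).inter_eq, measure_empty, zero_mul]
  · simp

variable {ν : Measure (A × X)}

lemma IsEquipartition.measure_fst_preimage (hC : IsEquipartition τ C)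
    (hν : MeasurePreserving Prod.fst ν τ) (i : Fin n) :
    ν (Prod.fst ⁻¹' C i) = (n : ℝ≥0∞)⁻¹ := by
  rw [hν.measure_preimage (hC.measurableSet i).nullMeasurableSet, hC.measure_eq]

lemma IsEquipartition.isProbabilityMeasure_cellLaw [IsFiniteMeasure ν] (hC : IsEquipartition τ C)
    (hν : MeasurePreserving Prod.fst ν τ) (i : Fin n) :
    IsProbabilityMeasure (cellLaw ν (C i)) := by
  have : IsProbabilityMeasure ν[|Prod.fst ⁻¹' C i] := cond_isProbabilityMeasure <| by
    rw [hC.measure_fst_preimage hν]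
    exact ENNReal.inv_ne_zero.2 (ENNReal.natCast_ne_top n)
  exact Measure.isProbabilityMeasure_map measurable_snd.aemeasurable

lemma integral_cellLaw_prod_cellLaw [IsFiniteMeasure ν] {ψ : X → X → ℝ}
    (hψ : Measurable (Function.uncurry ψ)) (S T : Set A) :
    ∫ q, ψ q.1 q.2 ∂((cellLaw ν S).prod (cellLaw ν T)) =
      (ν.real (Prod.fst ⁻¹' S))⁻¹ * (ν.real (Prod.fst ⁻¹' T))⁻¹ *
        ∫ p in (Prod.fst ⁻¹' S) ×ˢ (Prod.fst ⁻¹' T), ψ p.1.2 p.2.2 ∂(ν.prod ν) := by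
  change ∫ q, Function.uncurry ψ q ∂_ = _
  rw [cellLaw, cellLaw, Measure.map_prod_map _ _ measurable_snd measurable_snd,
    integral_map (measurable_snd.prodMap measurable_snd).aemeasurable hψ.aestronglyMeasurable,
    ProbabilityTheory.cond, ProbabilityTheory.cond, Measure.prod_smul_left,
    Measure.prod_smul_right, integral_smul_measure, integral_smul_measure, Measure.prod_restrict,
    ENNReal.toReal_inv, ENNReal.toReal_inv, smul_eq_mul, smul_eq_mul, mul_assoc]
  rfl

lemma edgeFunctional_cellKernel [IsFiniteMeasure ν] (hC : ∀ i, MeasurableSet (C i))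
    {ψ : X → X → ℝ} (hψ : Measurable (Function.uncurry ψ)) {M : ℝ} (hM : ∀ x y, |ψ x y| ≤ M) :
    edgeFunctional (cellKernel Q C) ψ ν = ∑ i, ∑ j, Q i j *
      ∫ p in (Prod.fst ⁻¹' C i) ×ˢ (Prod.fst ⁻¹' C j), ψ p.1.2 p.2.2 ∂(ν.prod ν) := by
  have hψ2 : Integrable (fun p : (A × X) × (A × X) => ψ p.1.2 p.2.2) (ν.prod ν) :=
    .of_bound (hψ.comp (measurable_snd.prodMap measurable_snd)).aestronglyMeasurable M
      (.of_forall fun p => hM p.1.2 p.2.2)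
  have hS (i j : Fin n) : MeasurableSet
      ((Prod.fst ⁻¹' C i : Set (A × X)) ×ˢ (Prod.fst ⁻¹' C j : Set (A × X))) :=
    (measurable_fst (hC i)).prod (measurable_fst (hC j))
  have hterm (p : (A × X) × (A × X)) : ψ p.1.2 p.2.2 * cellKernel Q C p.1.1 p.2.1 =
      ∑ i, ∑ j, Q i j * ((Prod.fst ⁻¹' C i) ×ˢ (Prod.fst ⁻¹' C j)).indicator
        (fun p => ψ p.1.2 p.2.2) p := by
    simp only [cellKernel, Finset.mul_sum]
    refine Finset.sum_congr rfl fun i _ => Finset.sum_congr rfl fun j _ => ?_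
    by_cases hi : p.1.1 ∈ C i <;> by_cases hj : p.2.1 ∈ C j <;>
      simp [indicator, hi, hj, mul_comm]
  simp only [edgeFunctional, hterm]
  rw [integral_finsetSum _ fun i _ => integrable_finsetSum _ fun j _ =>
    (hψ2.indicator (hS i j)).const_mul _]
  refine Finset.sum_congr rfl fun i _ => ?_
  rw [integral_finsetSum _ fun j _ => (hψ2.indicator (hS i j)).const_mul _]
  simp only [integral_const_mul, integral_indicator (hS i _)]

lemma IsEquipartition.edgeFunctional_cellKernel [IsFiniteMeasure ν] (hC : IsEquipartition τ C)
    (hν : MeasurePreserving Prod.fst ν τ) {ψ : X → X → ℝ} (hψ : Measurable (Function.uncurry ψ))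
    {M : ℝ} (hM : ∀ x y, |ψ x y| ≤ M) :
    edgeFunctional (cellKernel Q C) ψ ν = ∑ i, ∑ j, Q i j / (n : ℝ) ^ 2 *
      ∫ q, ψ q.1 q.2 ∂((cellLaw ν (C i)).prod (cellLaw ν (C j))) := by
  rw [EdgeLDP.edgeFunctional_cellKernel hC.measurableSet hψ hM]
  refine Finset.sum_congr rfl fun i _ => Finset.sum_congr rfl fun j _ => ?_
  have hn : (n : ℝ) ≠ 0 := Nat.cast_ne_zero.2 (Fin.pos i).ne'
  simp only [integral_cellLaw_prod_cellLaw hψ, measureReal_def, hC.measure_fst_preimage hν,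
    ENNReal.toReal_inv, ENNReal.toReal_natCast]
  field_simp

lemma IsEquipartition.edgeFunctional_cellMixture [IsFiniteMeasure τ] (hC : IsEquipartition τ C)
    (m : Fin n → Measure X) [∀ i, IsProbabilityMeasure (m i)] {ψ : X → X → ℝ}
    (hψ : Measurable (Function.uncurry ψ)) {M : ℝ} (hM : ∀ x y, |ψ x y| ≤ M) :
    edgeFunctional (cellKernel Q C) ψ (cellMixture τ C m) =
      ∑ i, ∑ j, Q i j / (n : ℝ) ^ 2 * ∫ q, ψ q.1 q.2 ∂((m i).prod (m j)) := by
  have hfst := hC.measurePreserving_fst_cellMixture m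
  have : IsFiniteMeasure ((cellMixture τ C m).map Prod.fst) := by rwa [hfst.map_eq]
  have := Measure.isFiniteMeasure_of_map measurable_fst.aemeasurable (μ := cellMixture τ C m)
  simp only [hC.edgeFunctional_cellKernel hfst hψ hM, hC.cellLaw_cellMixture]

lemma IsEquipartition.edgeFunctional_cellMixture_cellLaw [IsFiniteMeasure τ] [IsFiniteMeasure ν]
    (hC : IsEquipartition τ C) (hν : MeasurePreserving Prod.fst ν τ) {ψ : X → X → ℝ}
    (hψ : Measurable (Function.uncurry ψ)) {M : ℝ} (hM : ∀ x y, |ψ x y| ≤ M) :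
    edgeFunctional (cellKernel Q C) ψ (cellMixture τ C fun i => cellLaw ν (C i)) =
      edgeFunctional (cellKernel Q C) ψ ν := by
  have := hC.isProbabilityMeasure_cellLaw hν
  rw [hC.edgeFunctional_cellMixture _ hψ hM, hC.edgeFunctional_cellKernel hν hψ hM]

lemma IsEquipartition.edgeFunctional_empiricalLaw [IsFiniteMeasure τ]
    (hC : IsEquipartition τ C) (x : Fin n → X) {ψ : X → X → ℝ}
    (hψ : Measurable (Function.uncurry ψ)) {M : ℝ} (hM : ∀ x y, |ψ x y| ≤ M) :
    edgeFunctional (cellKernel Q C) ψ (empiricalLaw τ C x) =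
      (∑ i, ∑ j, ψ (x i) (x j) * Q i j) / (n : ℝ) ^ 2 := by
  rw [hC.edgeFunctional_cellMixture _ hψ hM]
  simp only [Finset.sum_div, Measure.dirac_prod_dirac]
  refine Finset.sum_congr rfl fun i _ => Finset.sum_congr rfl fun j _ => ?_
  have hdirac : ∫ q : X × X, ψ q.1 q.2 ∂.dirac (x i, x j) = ψ (x i) (x j) :=
    integral_dirac' (Function.uncurry ψ) _ hψ.stronglyMeasurable
  rw [hdirac, div_mul_eq_mul_div, mul_comm]

end Equipartition

section StepKernel

/-- The cell of `[0, 1]` on which the step kernel takes the index `i`, counted from `0`. -/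
def unitCell (n : ℕ) (i : Fin n) : Set ℝ :=
  Ioc ((i : ℕ) / n : ℝ) (((i : ℕ) + 1) / n)

lemma stepKernel_comp (n : ℕ) (Q : Fin n → Fin n → ℝ) (σ : ℝ → ℝ) :
    (fun x y => stepKernel n Q (σ x) (σ y)) = cellKernel Q fun i => σ ⁻¹' unitCell n i := by
  funext x y
  refine Finset.sum_congr rfl fun i _ => Finset.sum_congr rfl fun j _ => ?_
  simp only [indicator, unitCell, mem_preimage, Pi.one_apply]
  split_ifs <;> grind

lemma unif01_unitCell {n : ℕ} (i : Fin n) : unif01 (unitCell n i) = (n : ℝ≥0∞)⁻¹ := by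
  have hn : (0 : ℝ) < n := Nat.cast_pos.2 (Fin.pos i)
  have hi : ((i : ℕ) : ℝ) + 1 ≤ n := mod_cast i.2
  have hsub : unitCell n i ⊆ Icc 0 1 := fun u hu =>
    ⟨(by positivity : (0 : ℝ) ≤ (i : ℕ) / n).trans hu.1.le, hu.2.trans ((div_le_one hn).2 hi)⟩
  rw [unif01, Measure.restrict_eq_self _ hsub, unitCell, Real.volume_Ioc, ← sub_div,
    add_sub_cancel_left, one_div, ENNReal.ofReal_inv_of_pos hn, ENNReal.ofReal_natCast]

lemma exists_mem_unitCell {n : ℕ} (hn : n ≠ 0) {u : ℝ} (hu : u ∈ Ioc 0 1) :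
    ∃ i, u ∈ unitCell n i := by
  have hn' : (0 : ℝ) < n := Nat.cast_pos.2 (Nat.pos_of_ne_zero hn)
  have hpos : 0 < (n : ℝ) * u := mul_pos hn' hu.1
  obtain ⟨k, hk⟩ := Nat.exists_eq_succ_of_ne_zero (Nat.ceil_pos.2 hpos).ne'
  have hkn : k + 1 ≤ n := by
    rw [← Nat.succ_eq_add_one, ← hk]
    exact Nat.ceil_le.2 (mul_le_of_le_one_right hn'.le hu.2)
  have hlow := Nat.ceil_lt_add_one hpos.le
  have hhigh := Nat.le_ceil ((n : ℝ) * u)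
  rw [hk, Nat.succ_eq_add_one, Nat.cast_add, Nat.cast_one] at hlow hhigh
  refine ⟨⟨k, hkn⟩, ?_, ?_⟩
  · rw [div_lt_iff₀ hn', mul_comm]
    linarith
  · rw [le_div_iff₀ hn', mul_comm]
    exact hhigh

lemma isEquipartition_unitCell {n : ℕ} (hn : n ≠ 0) : IsEquipartition unif01 (unitCell n) where
  measurableSet _ := measurableSet_Ioc
  measure_eq := unif01_unitCell
  pairwise_disjoint := (pairwise_disjoint_on _).2 fun i j hij =>
    Ioc_disjoint_Ioc_of_le <| by
      gcongr
      exact_mod_cast hij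
  ae_mem := by
    have h0 : ∀ᵐ u ∂unif01, u ≠ 0 := ae_restrict_of_ae (Measure.ae_ne volume 0)
    have h1 : ∀ᵐ u ∂unif01, u ∈ Icc (0 : ℝ) 1 := ae_restrict_mem measurableSet_Icc
    filter_upwards [h0, h1] with u hu hu1
    exact mem_iUnion.2 (exists_mem_unitCell hn ⟨hu1.1.lt_of_ne' hu, hu1.2⟩)

end StepKernel

section CutDistance

variable {U V : ℝ → ℝ → ℝ}

lemma integral_abs_eq_toReal_kerNorm
    (hU : Integrable (Function.uncurry U) (unif01.prod unif01)) :
    ∫ q, |U q.1 q.2| ∂(unif01.prod unif01) = (kerNorm U 1).toReal := by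
  rw [kerNorm, eLpNorm_one_eq_lintegral_enorm]
  exact integral_norm_eq_lintegral_enorm hU.1

lemma integral_abs_sub_le_toReal_kerNorm_add
    (hU : Integrable (Function.uncurry U) (unif01.prod unif01))
    (hV : Integrable (Function.uncurry V) (unif01.prod unif01)) :
    ∫ q, |U q.1 q.2 - V q.1 q.2| ∂(unif01.prod unif01) ≤
      (kerNorm U 1).toReal + (kerNorm V 1).toReal := by
  rw [← integral_abs_eq_toReal_kerNorm hU, ← integral_abs_eq_toReal_kerNorm hV]
  exact (integral_mono (hU.sub hV).abs (hU.abs.add hV.abs) fun q => abs_sub _ _).trans_eq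
    (integral_add hU.abs hV.abs)

lemma integrable_of_kerNorm_ne_top (hU : Measurable (Function.uncurry U))
    (h : kerNorm U 1 ≠ ∞) : Integrable (Function.uncurry U) (unif01.prod unif01) :=
  memLp_one_iff_integrable.1 ⟨hU.aestronglyMeasurable, h.lt_top⟩

lemma kerNorm_comp (hU : Measurable (Function.uncurry U)) {σ : ℝ → ℝ}
    (hσ : MeasurePreserving σ unif01 unif01) (r : ℝ≥0∞) :
    kerNorm (fun x y => U (σ x) (σ y)) r = kerNorm U r := by
  have h := eLpNorm_comp_measurePreserving (p := r) (g := Function.uncurry U)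
    hU.aestronglyMeasurable (hσ.prod hσ)
  exact h

lemma abs_setIntegral_setIntegral_le {A : Type*} [MeasurableSpace A] {τ : Measure A} [SFinite τ]
    {U : A → A → ℝ} (hU : Integrable (Function.uncurry U) (τ.prod τ)) (S T : Set A) :
    |∫ a in S, ∫ b in T, U a b ∂τ ∂τ| ≤ ∫ q, |U q.1 q.2| ∂(τ.prod τ) := by
  calc |∫ a in S, ∫ b in T, U a b ∂τ ∂τ| = |∫ q in S ×ˢ T, Function.uncurry U q ∂(τ.prod τ)| := by
        rw [setIntegral_prod _ hU.integrableOn]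
        rfl
    _ ≤ ∫ q in S ×ˢ T, |U q.1 q.2| ∂(τ.prod τ) := abs_integral_le_integral_abs
    _ ≤ ∫ q, |U q.1 q.2| ∂(τ.prod τ) :=
        setIntegral_le_integral hU.abs (.of_forall fun _ => abs_nonneg _)

lemma cutBound_cutDist (hU : Integrable (Function.uncurry U) (unif01.prod unif01))
    (hV : Integrable (Function.uncurry V) (unif01.prod unif01)) :
    CutBound unif01 (fun x y => U x y - V x y) (cutDist U V) := by
  have hle (S T : {S : Set ℝ // MeasurableSet S}) :
      |∫ x in Icc (0 : ℝ) 1 ∩ S.1, ∫ y in Icc (0 : ℝ) 1 ∩ T.1, (U x y - V x y)| ≤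
        ∫ q, |U q.1 q.2 - V q.1 q.2| ∂(unif01.prod unif01) := by
    have h := abs_setIntegral_setIntegral_le (U := fun x y => U x y - V x y) (hU.sub hV) S.1 T.1
    rw [unif01, Measure.restrict_restrict S.2, Measure.restrict_restrict T.2] at h
    rwa [inter_comm _ S.1, inter_comm _ T.1]
  intro S T hS hT
  have hne : Nonempty {S : Set ℝ // MeasurableSet S} := ⟨⟨∅, .empty⟩⟩
  calc |∫ x in S, ∫ y in T, (U x y - V x y) ∂unif01 ∂unif01|
      = |∫ x in Icc (0 : ℝ) 1 ∩ S, ∫ y in Icc (0 : ℝ) 1 ∩ T, (U x y - V x y)| := by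
        rw [unif01, Measure.restrict_restrict hS, Measure.restrict_restrict hT,
          inter_comm _ S, inter_comm _ T]
    _ ≤ ⨆ T' : {T : Set ℝ // MeasurableSet T},
          |∫ x in Icc (0 : ℝ) 1 ∩ S, ∫ y in Icc (0 : ℝ) 1 ∩ T'.1, (U x y - V x y)| :=
        le_ciSup (f := fun T' : {T : Set ℝ // MeasurableSet T} =>
            |∫ x in Icc (0 : ℝ) 1 ∩ S, ∫ y in Icc (0 : ℝ) 1 ∩ T'.1, (U x y - V x y)|)
          ⟨_, forall_mem_range.2 (hle ⟨S, hS⟩)⟩ ⟨T, hT⟩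
    _ ≤ cutDist U V :=
        le_ciSup (f := fun S' : {S : Set ℝ // MeasurableSet S} =>
            ⨆ T' : {T : Set ℝ // MeasurableSet T},
              |∫ x in Icc (0 : ℝ) 1 ∩ S'.1, ∫ y in Icc (0 : ℝ) 1 ∩ T'.1, (U x y - V x y)|)
          ⟨_, forall_mem_range.2 fun S' => ciSup_le (hle S')⟩ ⟨S, hS⟩

lemma exists_cutDist_comp_lt (U V : ℝ → ℝ → ℝ) {ε : ℝ} (hε : 0 < ε) :
    ∃ σ, MeasurePreserving σ unif01 unif01 ∧
      cutDist (fun x y => U (σ x) (σ y)) V < weakCutDist U V + ε := by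
  have : Nonempty {σ : ℝ → ℝ // MPB σ} := ⟨⟨id, bijOn_id _, .id _⟩⟩
  obtain ⟨σ, hσ⟩ := exists_lt_of_ciInf_lt (lt_add_of_pos_right (weakCutDist U V) hε)
  exact ⟨σ.1, σ.2.2, hσ⟩

end CutDistance

section KernelApproximation

lemma exists_isEquipartition_cutBound {n : ℕ} (hn : n ≠ 0) (Q : Fin n → Fin n → ℝ)
    {W : ℝ → ℝ → ℝ} (hW : Integrable (Function.uncurry W) (unif01.prod unif01)) {ε : ℝ}
    (hε : 0 < ε) :
    ∃ C : Fin n → Set ℝ, IsEquipartition unif01 C ∧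
      kerNorm (cellKernel Q C) 1 = kerNorm (stepKernel n Q) 1 ∧
      CutBound unif01 (fun x y => cellKernel Q C x y - W x y)
        (weakCutDist (stepKernel n Q) W + ε) := by
  obtain ⟨σ, hσ, hcut⟩ := exists_cutDist_comp_lt (stepKernel n Q) W hε
  have hC := (isEquipartition_unitCell hn).preimage hσ
  have hmeas : Measurable (Function.uncurry (stepKernel n Q)) := by
    rw [show stepKernel n Q = cellKernel Q (unitCell n) from stepKernel_comp n Q id]
    exact measurable_cellKernel (isEquipartition_unitCell hn).measurableSet
  refine ⟨_, hC, ?_, fun S T hS hT => ?_⟩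
  · rw [← stepKernel_comp, kerNorm_comp hmeas hσ]
  · refine (cutBound_cutDist (integrable_cellKernel hC.measurableSet) hW S T hS hT).trans ?_
    rw [← stepKernel_comp]
    exact hcut.le

/-- The kernels `cellKernel (Q n) (C n)` of equipartitions `C n` represent `W` in the limit: their
edge functionals with weight `ψ` converge to that of `W`, uniformly over all laws with uniform
first marginal. -/
structure IsCellApproximation {X : Type*} [MeasurableSpace X] (Q : ∀ n : ℕ, Fin n → Fin n → ℝ)
    (C : ∀ n : ℕ, Fin n → Set ℝ) (W : ℝ → ℝ → ℝ) (ψ : X → X → ℝ) : Prop where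
  isEquipartition : ∀ᶠ n in atTop, IsEquipartition unif01 (C n)
  abs_sub_le : ∀ ε > 0, ∀ᶠ n in atTop, ∀ (ν : Measure (ℝ × X)) [SFinite ν],
    MeasurePreserving Prod.fst ν unif01 →
    |edgeFunctional (cellKernel (Q n) (C n)) ψ ν - edgeFunctional W ψ ν| ≤ ε

variable {X : Type*} [MetricSpace X] [CompactSpace X] [MeasurableSpace X] [BorelSpace X]

theorem exists_isCellApproximation (Q : ∀ n : ℕ, Fin n → Fin n → ℝ) {W : ℝ → ℝ → ℝ}
    (hW : Measurable (Function.uncurry W)) (hW1 : kerNorm W 1 ≠ ∞)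
    (hcut : Tendsto (fun n => weakCutDist (stepKernel n (Q n)) W) atTop (𝓝 0))
    (hnorm : limsup (fun n => kerNorm (stepKernel n (Q n)) 1) atTop ≠ ∞) {ψ : X → X → ℝ}
    (hψ : Continuous (Function.uncurry ψ)) : ∃ C, IsCellApproximation Q C W ψ := by
  have hWint := integrable_of_kerNorm_ne_top hW hW1
  have hex (n : ℕ) : ∃ C : Fin n → Set ℝ, n ≠ 0 → IsEquipartition unif01 C ∧
      kerNorm (cellKernel (Q n) C) 1 = kerNorm (stepKernel n (Q n)) 1 ∧
      CutBound unif01 (fun x y => cellKernel (Q n) C x y - W x y)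
        (weakCutDist (stepKernel n (Q n)) W + 1 / ((n : ℝ) + 1)) := by
    by_cases hn : n = 0
    · exact ⟨fun _ => ∅, fun h => absurd hn h⟩
    · obtain ⟨C, hC⟩ := exists_isEquipartition_cutBound hn (Q n) hWint
        (Nat.one_div_pos_of_nat (n := n) (α := ℝ))
      exact ⟨C, fun _ => hC⟩
  choose C hC using hex
  refine ⟨C, (eventually_ne_atTop 0).mono fun n hn => (hC n hn).1, fun ε hε => ?_⟩
  obtain ⟨b, hb, -⟩ := ENNReal.lt_iff_exists_nnreal_btwn.1 hnorm.lt_top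
  obtain ⟨M, hM⟩ := exists_forall_abs_le_of_continuous hψ
  obtain ⟨κ, hκ0, hκ⟩ := exists_abs_edgeFunctional_le_of_cutBound (τ := unif01) hψ
    (L := b + (kerNorm W 1).toReal) (by positivity) hε
  have hcut' : Tendsto (fun n : ℕ => weakCutDist (stepKernel n (Q n)) W + 1 / ((n : ℝ) + 1))
      atTop (𝓝 0) := by
    simpa only [add_zero] using hcut.add tendsto_one_div_add_atTop_nhds_zero_nat
  filter_upwards [eventually_lt_of_limsup_lt hb, eventually_ne_atTop 0,
    hcut'.eventually_le_const hκ0] with n hnb hn hnκ ν _ hν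
  obtain ⟨hCn, hker, hbound⟩ := hC n hn
  have hint : Integrable (Function.uncurry (cellKernel (Q n) (C n))) (unif01.prod unif01) :=
    integrable_cellKernel hCn.measurableSet
  rw [← edgeFunctional_sub_kernel hν hint hWint hψ.measurable hM]
  refine hκ (fun x y => cellKernel (Q n) (C n) x y - W x y)
    ((measurable_cellKernel hCn.measurableSet).sub hW) (hint.sub hWint)
    ((integral_abs_sub_le_toReal_kerNorm_add hint hWint).trans ?_)
    (fun S T hS hT => (hbound S T hS hT).trans hnκ) ν hν
  rw [hker]
  gcongr
  exact ENNReal.toReal_le_coe_of_le_coe hnb.le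

end KernelApproximation

section FirstMarginal

variable {A X : Type*} [MeasurableSpace A] [MeasurableSpace X] {τ : Measure A} {K : Set A}

/-- The set `𝒯ℳ` of laws on `A × X` with first marginal `τ`, in the space of probability measures
with the weak topology. -/
def lawsWithFst (X : Type*) [MeasurableSpace X] (τ : Measure A) :
    Set (ProbabilityMeasure (A × X)) :=
  {ν | MeasurePreserving Prod.fst (ν : Measure (A × X)) τ}

lemma ae_prod_mem {ν : Measure (A × X)} [SFinite ν] (hν : MeasurePreserving Prod.fst ν τ)
    (hτ : ∀ᵐ a ∂τ, a ∈ K) : ∀ᵐ p ∂(ν.prod ν), p.1.1 ∈ K ∧ p.2.1 ∈ K := by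
  have hK : ∀ᵐ z ∂ν, z.1 ∈ K := hν.quasiMeasurePreserving.ae hτ
  exact (Measure.quasiMeasurePreserving_fst.ae hK).and (Measure.quasiMeasurePreserving_snd.ae hK)

end FirstMarginal

section WeakTopology

variable {A X : Type*} [MetricSpace A] [MeasurableSpace A] [BorelSpace A]
  [MetricSpace X] [CompactSpace X] [MeasurableSpace X] [BorelSpace X]
  {τ : Measure A} {K : Set A}

theorem isCompact_lawsWithFst [IsProbabilityMeasure τ] (hK : IsCompact K)
    (hτ : ∀ᵐ a ∂τ, a ∈ K) : IsCompact (lawsWithFst X τ) := by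
  let τ' : ProbabilityMeasure A := ⟨τ, inferInstance⟩
  have hpre : lawsWithFst X τ = (fun ν : ProbabilityMeasure (A × X) =>
      ν.map measurable_fst.aemeasurable) ⁻¹' {τ'} := by
    ext ν
    exact ⟨fun h => Subtype.ext h.map_eq, fun h => ⟨measurable_fst, congrArg Subtype.val h⟩⟩
  have hclosed : IsClosed (lawsWithFst X τ) :=
    hpre ▸ isClosed_singleton.preimage (ProbabilityMeasure.continuous_map continuous_fst)
  rw [← hclosed.closure_eq]
  refine isCompact_closure_of_isTightMeasureSet
    (isTightMeasureSet_iff_exists_isCompact_measure_compl_le.2 fun ε _ =>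
      ⟨K ×ˢ univ, hK.prod isCompact_univ, ?_⟩)
  rintro _ ⟨ν, hν, rfl⟩
  have hnull : (ν : Measure (A × X)) (K ×ˢ univ)ᶜ = 0 := by
    rw [prod_univ]
    exact hν.quasiMeasurePreserving.ae hτ
  exact hnull.trans_le zero_le

lemma abs_mul_sub_mul_le {a b a' b' M N κ : ℝ} (ha : |a'| ≤ M) (hb : |b| ≤ N)
    (hκa : |a - a'| ≤ κ) (hκb : |b - b'| ≤ κ) : |a * b - a' * b'| ≤ (M + N) * κ := by
  calc |a * b - a' * b'| = |(a - a') * b + a' * (b - b')| := by ring_nf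
    _ ≤ |a - a'| * |b| + |a'| * |b - b'| := (abs_add_le _ _).trans_eq (by rw [abs_mul, abs_mul])
    _ ≤ κ * N + M * κ := by gcongr <;> exact (abs_nonneg _).trans ‹_›
    _ = (M + N) * κ := by ring

variable [SecondCountableTopology A] {W : A → A → ℝ} {ψ : X → X → ℝ}

lemma exists_finset_tensor_edgeFunctional_near [IsFiniteMeasure τ] (hK : IsCompact K)
    (hτ : ∀ᵐ a ∂τ, a ∈ K) (hW : Integrable (Function.uncurry W) (τ.prod τ))
    (hψ : Continuous (Function.uncurry ψ)) {ε : ℝ} (hε : 0 < ε) :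
    ∃ S : Finset ((A × X →ᵇ ℝ) × (A × X →ᵇ ℝ)),
      ∀ (ν : Measure (A × X)) [IsProbabilityMeasure ν], MeasurePreserving Prod.fst ν τ →
        |edgeFunctional W ψ ν - ∑ s ∈ S, (∫ z, s.1 z ∂ν) * ∫ z, s.2 z ∂ν| ≤ ε := by
  obtain ⟨M, hM⟩ := exists_forall_abs_le_of_continuous hψ
  have hη : 0 < ε / (2 * (|M| + 1)) := by positivity
  obtain ⟨V, hV, hVint⟩ := hW.exists_boundedContinuous_integral_sub_le hη
  obtain ⟨S, hS⟩ := exists_finset_tensor_near (hK.prod (isCompact_univ (X := X)))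
    (F := fun z z' => ψ z.2 z'.2 * V (z.1, z'.1))
    ((hψ.comp (by fun_prop : Continuous fun p : (A × X) × (A × X) => (p.1.2, p.2.2))).mul
      (V.continuous.comp (by fun_prop))) (half_pos hε)
  refine ⟨S, fun ν _ hν => ?_⟩
  have hkernel : |edgeFunctional W ψ ν - edgeFunctional (fun a b => V (a, b)) ψ ν| ≤ ε / 2 := by
    rw [← edgeFunctional_sub_kernel (V := fun a b => V (a, b)) hν hW hVint hψ.measurable hM]
    calc _ ≤ |M| * ∫ q, |W q.1 q.2 - V (q.1, q.2)| ∂(τ.prod τ) :=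
          abs_edgeFunctional_le hν (U := fun a b => W a b - V (a, b)) (hW.sub hVint)
            fun x y => (hM x y).trans (le_abs_self M)
      _ ≤ |M| * (ε / (2 * (|M| + 1))) := by gcongr; exact hV
      _ ≤ ε / 2 := by
        rw [← mul_div_assoc, div_le_div_iff₀ (by positivity) two_pos]
        nlinarith
  have hint (s : (A × X →ᵇ ℝ) × (A × X →ᵇ ℝ)) :
      Integrable (fun p : (A × X) × (A × X) => s.1 p.1 * s.2 p.2) (ν.prod ν) :=
    (s.1.integrable ν).mul_prod (s.2.integrable ν)
  have htensor : |edgeFunctional (fun a b => V (a, b)) ψ ν -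
      ∑ s ∈ S, (∫ z, s.1 z ∂ν) * ∫ z, s.2 z ∂ν| ≤ ε / 2 := by
    simp only [← integral_prod_mul]
    rw [← integral_finsetSum _ fun s _ => hint s, edgeFunctional, ← integral_sub
      (integrable_edgeFunctional (U := fun a b => V (a, b)) hν hVint hψ.measurable hM)
      (integrable_finsetSum _ fun s _ => hint s), ← Real.norm_eq_abs]
    refine (norm_integral_le_of_norm_le_const ?_).trans_eq
      (by rw [probReal_univ, mul_one] : ε / 2 * (ν.prod ν).real univ = ε / 2)
    filter_upwards [ae_prod_mem hν hτ] with p hp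
    exact hS p.1 ⟨hp.1, trivial⟩ p.2 ⟨hp.2, trivial⟩
  exact ((abs_sub_le _ _ _).trans (add_le_add hkernel htensor)).trans_eq (add_halves ε)

lemma exists_forall_abs_edgeFunctional_sub_le [IsFiniteMeasure τ] (hK : IsCompact K)
    (hτ : ∀ᵐ a ∂τ, a ∈ K) (hW : Integrable (Function.uncurry W) (τ.prod τ))
    (hψ : Continuous (Function.uncurry ψ)) {ε : ℝ} (hε : 0 < ε) :
    ∃ s : Finset (A × X →ᵇ ℝ), ∃ κ > 0, ∀ (ν ν' : Measure (A × X)) [IsProbabilityMeasure ν]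
      [IsProbabilityMeasure ν'], MeasurePreserving Prod.fst ν τ → MeasurePreserving Prod.fst ν' τ →
      (∀ f ∈ s, |∫ z, f z ∂ν - ∫ z, f z ∂ν'| < κ) →
      |edgeFunctional W ψ ν - edgeFunctional W ψ ν'| ≤ ε := by
  obtain ⟨S, hS⟩ := exists_finset_tensor_edgeFunctional_near (X := X) hK hτ hW hψ
    (show 0 < ε / 3 by positivity)
  classical
  set N : ℝ := ∑ s ∈ S, (‖s.1‖ + ‖s.2‖)
  have : 0 ≤ N := Finset.sum_nonneg fun s _ => by positivity
  refine ⟨S.image Prod.fst ∪ S.image Prod.snd, ε / (3 * (N + 1)), by positivity,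
    fun ν ν' _ _ hν hν' hclose => ?_⟩
  have hfst (s) (hs : s ∈ S) := hclose s.1 (Finset.mem_union_left _ (Finset.mem_image_of_mem _ hs))
  have hsnd (s) (hs : s ∈ S) := hclose s.2 (Finset.mem_union_right _ (Finset.mem_image_of_mem _ hs))
  have hbound (m : Measure (A × X)) [IsProbabilityMeasure m] (f : A × X →ᵇ ℝ) :
      |∫ z, f z ∂m| ≤ ‖f‖ := by
    simpa using f.norm_integral_le_norm m
  have hsum : |∑ s ∈ S, (∫ z, s.1 z ∂ν) * ∫ z, s.2 z ∂ν -
      ∑ s ∈ S, (∫ z, s.1 z ∂ν') * ∫ z, s.2 z ∂ν'| ≤ ε / 3 := by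
    rw [← Finset.sum_sub_distrib]
    calc _ ≤ ∑ s ∈ S, (‖s.1‖ + ‖s.2‖) * (ε / (3 * (N + 1))) := by
          refine (Finset.abs_sum_le_sum_abs _ _).trans (Finset.sum_le_sum fun s hs => ?_)
          exact abs_mul_sub_mul_le (hbound ν' s.1) (hbound ν s.2) (hfst s hs).le (hsnd s hs).le
      _ = N * (ε / (3 * (N + 1))) := (Finset.sum_mul ..).symm
      _ ≤ ε / 3 := by
        rw [← mul_div_assoc, div_le_div_iff₀ (by positivity) three_pos]
        nlinarith
  have hν₁ := hS ν hν
  have hν₂ := hS ν' hν'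
  rw [abs_le] at hν₁ hν₂ hsum ⊢
  constructor <;> linarith

theorem continuousOn_edgeFunctional [IsFiniteMeasure τ] (hK : IsCompact K)
    (hτ : ∀ᵐ a ∂τ, a ∈ K) (hW : Integrable (Function.uncurry W) (τ.prod τ))
    (hψ : Continuous (Function.uncurry ψ)) :
    ContinuousOn (fun ν : ProbabilityMeasure (A × X) => edgeFunctional W ψ ν)
      (lawsWithFst X τ) := by
  intro ν₀ hν₀
  refine Metric.tendsto_nhds.2 fun ε hε => ?_
  obtain ⟨s, κ, hκ, hclose⟩ :=
    exists_forall_abs_edgeFunctional_sub_le (X := X) hK hτ hW hψ (half_pos hε)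
  have hnear : ∀ᶠ ν : ProbabilityMeasure (A × X) in 𝓝 ν₀, ∀ f ∈ s,
      |∫ z, f z ∂(ν : Measure (A × X)) - ∫ z, f z ∂(ν₀ : Measure (A × X))| < κ :=
    (Finset.eventually_all s).2 fun f _ => Metric.tendsto_nhds.1
      ((ProbabilityMeasure.continuous_integral_boundedContinuousFunction f).tendsto ν₀) κ hκ
  filter_upwards [nhdsWithin_le_nhds hnear, self_mem_nhdsWithin] with ν hν hνK
  exact (hclose ν ν₀ hνK hν₀ hν).trans_lt (half_lt_self hε)

end WeakTopology

section ContractedRate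

variable {Z : Type*} [MeasurableSpace Z] {ρ : Measure Z} {𝓜 : Set (ProbabilityMeasure Z)}
  {T : Measure Z → ℝ}

/-- The rate function of the images under `T` of random laws in `𝓜` that satisfy an LDP with the
relative entropy as rate function (contraction principle). -/
noncomputable def contractedRate (ρ : Measure Z) (𝓜 : Set (ProbabilityMeasure Z))
    (T : Measure Z → ℝ) (t : ℝ) : ℝ≥0∞ :=
  ⨅ ν ∈ {ν : ProbabilityMeasure Z | ν ∈ 𝓜 ∧ T ν = t}, klDiv (ν : Measure Z) ρ

lemma contractedRate_le {ν : ProbabilityMeasure Z} (hν : ν ∈ 𝓜) :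
    contractedRate ρ 𝓜 T (T ν) ≤ klDiv (ν : Measure Z) ρ :=
  iInf₂_le ν ⟨hν, rfl⟩

variable [TopologicalSpace Z] [BorelSpace Z]

lemma continuous_klDual (f : Z →ᵇ ℝ) : Continuous fun ν : ProbabilityMeasure Z => klDual ρ f ν :=
  (ProbabilityMeasure.continuous_integral_boundedContinuousFunction f).sub continuous_const

variable [TopologicalSpace.PseudoMetrizableSpace Z] [IsFiniteMeasure ρ]

theorem lowerSemicontinuous_klDiv :
    LowerSemicontinuous fun ν : ProbabilityMeasure Z => klDiv (ν : Measure Z) ρ := by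
  refine lowerSemicontinuous_iff_isClosed_preimage.2 fun c => ?_
  rcases eq_or_ne c ∞ with rfl | hc
  · simp
  have hpre : (fun ν : ProbabilityMeasure Z => klDiv (ν : Measure Z) ρ) ⁻¹' Iic c =
      ⋂ f : Z →ᵇ ℝ, {ν : ProbabilityMeasure Z | klDual ρ f ν ≤ c.toReal} := by
    ext ν
    rw [mem_preimage, mem_Iic, ← ENNReal.ofReal_toReal hc,
      klDiv_le_ofReal_iff_forall_klDual_le ENNReal.toReal_nonneg, ENNReal.ofReal_toReal hc]
    simp only [mem_iInter, mem_ofPred_eq]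
  exact hpre ▸ isClosed_iInter fun f => isClosed_le (continuous_klDual f) continuous_const

theorem exists_finset_lt_klDual {K : Set (ProbabilityMeasure Z)}
    (hK : IsCompact K) {c : ℝ} (hc : 0 ≤ c)
    (h : ∀ ν ∈ K, ENNReal.ofReal c < klDiv (ν : Measure Z) ρ) :
    ∃ s : Finset (Z →ᵇ ℝ), ∀ ν ∈ K, ∃ f ∈ s, c < klDual ρ f ν := by
  obtain ⟨s, hs⟩ := hK.elim_finite_subcover
    (fun f : Z →ᵇ ℝ => {ν : ProbabilityMeasure Z | c < klDual ρ f ν})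
    (fun f => isOpen_lt continuous_const (continuous_klDual f)) fun ν hν => by
      simpa [mem_iUnion, klDiv_le_ofReal_iff_forall_klDual_le hc] using (h ν hν).not_ge
  exact ⟨s, fun ν hν => by simpa only [mem_iUnion, exists_prop, mem_ofPred_eq] using hs hν⟩

lemma exists_klDiv_le_of_contractedRate_le (h𝓜 : IsCompact 𝓜)
    (hT : ContinuousOn (fun ν : ProbabilityMeasure Z => T ν) 𝓜) {t : ℝ} {c : ℝ≥0∞} (hc : c ≠ ∞)
    (h : contractedRate ρ 𝓜 T t ≤ c) :
    ∃ ν ∈ 𝓜, T ν = t ∧ klDiv (ν : Measure Z) ρ ≤ c := by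
  have hcompact : IsCompact {ν : ProbabilityMeasure Z | ν ∈ 𝓜 ∧ T ν = t} :=
    h𝓜.of_isClosed_subset (hT.preimage_isClosed_of_isClosed h𝓜.isClosed isClosed_singleton)
      inter_subset_left
  have hne : {ν : ProbabilityMeasure Z | ν ∈ 𝓜 ∧ T ν = t}.Nonempty := by
    by_contra hempty
    rw [not_nonempty_iff_eq_empty] at hempty
    simp only [contractedRate, hempty, mem_empty_iff_false, iInf_false, iInf_top, top_le_iff] at h
    exact hc h
  obtain ⟨ν, ⟨hν, hνt⟩, hmin⟩ :=
    ((lowerSemicontinuous_klDiv (ρ := ρ)).lowerSemicontinuousOn _).exists_isMinOn hne hcompact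
  exact ⟨ν, hν, hνt, (le_iInf₂ fun ν' hν' => hmin hν').trans h⟩

theorem isCompact_setOf_contractedRate_le (h𝓜 : IsCompact 𝓜)
    (hT : ContinuousOn (fun ν : ProbabilityMeasure Z => T ν) 𝓜) {c : ℝ≥0∞} (hc : c ≠ ∞) :
    IsCompact {t | contractedRate ρ 𝓜 T t ≤ c} := by
  have himage : {t | contractedRate ρ 𝓜 T t ≤ c} = (fun ν : ProbabilityMeasure Z => T ν) ''
      (𝓜 ∩ {ν | klDiv (ν : Measure Z) ρ ≤ c}) := by
    ext t
    constructor
    · intro ht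
      obtain ⟨ν, hν, rfl, hle⟩ := exists_klDiv_le_of_contractedRate_le h𝓜 hT hc ht
      exact ⟨ν, ⟨hν, hle⟩, rfl⟩
    · rintro ⟨ν, ⟨hν, hle⟩, rfl⟩
      exact (contractedRate_le hν).trans hle
  rw [himage]
  exact (h𝓜.inter_right (lowerSemicontinuous_klDiv.isClosed_preimage c)).image_of_continuousOn
    (hT.mono inter_subset_left)

theorem exists_finset_lt_klDual_of_near (h𝓜 : IsCompact 𝓜)
    (hT : ContinuousOn (fun ν : ProbabilityMeasure Z => T ν) 𝓜) {F : Set ℝ} (hF : IsClosed F)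
    {c : ℝ} (hc : 0 ≤ c) (h : ∀ t ∈ F, ENNReal.ofReal c < contractedRate ρ 𝓜 T t) :
    ∃ s : Finset (Z →ᵇ ℝ), ∃ δ > 0, ∀ ν ∈ 𝓜, ∀ t ∈ F, |t - T ν| < δ →
      ∃ f ∈ s, c < klDual ρ f ν := by
  have hcompact : IsCompact (𝓜 ∩ (fun ν : ProbabilityMeasure Z => T ν) ⁻¹' F) :=
    h𝓜.of_isClosed_subset (hT.preimage_isClosed_of_isClosed h𝓜.isClosed hF) inter_subset_left
  obtain ⟨s, hs⟩ := exists_finset_lt_klDual hcompact hc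
    fun ν hν => (h _ hν.2).trans_le (contractedRate_le hν.1)
  set G : Set (ProbabilityMeasure Z) := {ν | ∃ f ∈ s, c < klDual ρ f ν} with hG
  have hGopen : IsOpen G := by
    simp only [hG, ← exists_prop, ofPred_exists]
    exact isOpen_biUnion fun f _ => isOpen_lt continuous_const (continuous_klDual f)
  obtain ⟨δ, hδ, hfar⟩ := ((h𝓜.diff hGopen).image_of_continuousOn
    (hT.mono sdiff_subset)).exists_thickening_subset_open hF.isOpen_compl (by
      rintro _ ⟨ν, ⟨hν, hνG⟩, rfl⟩ hνF
      exact hνG (hs ν ⟨hν, hνF⟩))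
  refine ⟨s, δ, hδ, fun ν hν t ht hclose => ?_⟩
  by_contra hνG
  exact hfar (Metric.mem_thickening_iff.2 ⟨T ν, mem_image_of_mem _ ⟨hν, hνG⟩, hclose⟩) ht

end ContractedRate

section CellMean

variable {A X : Type*} [MeasurableSpace A] {τ : Measure A} {f : A × X → ℝ} {M : ℝ}

/-- The average over the cell `S` of `f (·, y)`; integrals of `f` against a `cellMixture` are
averages of such cell means. -/
noncomputable def cellMean (τ : Measure A) (f : A × X → ℝ) (S : Set A) (y : X) : ℝ :=
  ∫ a, f (a, y) ∂τ[|S]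

lemma abs_cellMean_le (hM : ∀ z, |f z| ≤ M) (S : Set A) [IsProbabilityMeasure τ[|S]] (y : X) :
    |cellMean τ f S y| ≤ M := by
  have hle := norm_integral_le_of_norm_le_const (μ := τ[|S]) (f := fun a => f (a, y)) (C := M)
    (.of_forall fun a => hM (a, y))
  rwa [probReal_univ, mul_one] at hle

variable [MeasurableSpace X]

lemma measurable_cellMean [SFinite τ] (hf : Measurable f) (S : Set A) :
    Measurable (cellMean τ f S) :=
  hf.stronglyMeasurable.integral_prod_left'.measurable

lemma exp_cellMean_le (hf : Measurable f) (hM : ∀ z, |f z| ≤ M) (S : Set A)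
    [IsProbabilityMeasure τ[|S]] (y : X) :
    Real.exp (cellMean τ f S y) ≤ 1 + cellMean τ (fun z => Real.exp (f z) - 1) S y := by
  have hfy : Measurable fun a => f (a, y) := hf.comp measurable_prodMk_right
  have hMy (a : A) : |f (a, y)| ≤ M := hM (a, y)
  have hint : Integrable (fun a => f (a, y)) τ[|S] :=
    .of_bound hfy.aestronglyMeasurable M (.of_forall hMy)
  have hexp := integrable_exp_of_abs_le (ρ := τ[|S]) hfy hMy
  have hjensen : Real.exp (∫ a, f (a, y) ∂τ[|S]) ≤ ∫ a, Real.exp (f (a, y)) ∂τ[|S] :=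
    convexOn_exp.map_integral_le Real.continuous_exp.continuousOn isClosed_univ
      (.of_forall fun _ => mem_univ _) hint hexp
  rw [cellMean, cellMean, integral_sub hexp (integrable_const 1), integral_const, probReal_univ,
    one_smul, add_sub_cancel]
  exact hjensen

variable {n : ℕ} {C : Fin n → Set A}

lemma IsEquipartition.isProbabilityMeasure_cond [IsFiniteMeasure τ] (hC : IsEquipartition τ C)
    (i : Fin n) : IsProbabilityMeasure τ[|C i] :=
  cond_isProbabilityMeasure <| by
    rw [hC.measure_eq]
    exact ENNReal.inv_ne_zero.2 (ENNReal.natCast_ne_top n)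

lemma IsEquipartition.restrict_eq_smul_cond (hC : IsEquipartition τ C) (i : Fin n) :
    τ.restrict (C i) = (n : ℝ≥0∞)⁻¹ • τ[|C i] := by
  have hn : (n : ℝ≥0∞) ≠ 0 := Nat.cast_ne_zero.2 (Fin.pos i).ne'
  rw [ProbabilityTheory.cond, hC.measure_eq, inv_inv, smul_smul,
    ENNReal.inv_mul_cancel hn (ENNReal.natCast_ne_top n), one_smul]

lemma IsEquipartition.integral_cellMixture [IsFiniteMeasure τ] (hC : IsEquipartition τ C)
    (m : Fin n → Measure X) [∀ i, IsFiniteMeasure (m i)] (hf : Measurable f)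
    (hM : ∀ z, |f z| ≤ M) :
    ∫ z, f z ∂cellMixture τ C m = (n : ℝ)⁻¹ * ∑ i, ∫ y, cellMean τ f (C i) y ∂m i := by
  have hint (m : Measure (A × X)) [IsFiniteMeasure m] : Integrable f m :=
    .of_bound hf.aestronglyMeasurable M (.of_forall hM)
  rw [cellMixture, integral_finsetSum_measure fun i _ => hint _, Finset.mul_sum]
  refine Finset.sum_congr rfl fun i _ => ?_
  rw [hC.restrict_eq_smul_cond, Measure.prod_smul_left, integral_smul_measure,
    integral_prod_symm _ (hint _), ENNReal.toReal_inv, ENNReal.toReal_natCast, smul_eq_mul]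
  rfl

lemma IsEquipartition.integral_empiricalLaw [IsFiniteMeasure τ] (hC : IsEquipartition τ C)
    (x : Fin n → X) (hf : Measurable f) (hM : ∀ z, |f z| ≤ M) :
    ∫ z, f z ∂empiricalLaw τ C x = (n : ℝ)⁻¹ * ∑ i, cellMean τ f (C i) (x i) := by
  simp only [hC.integral_cellMixture _ hf hM,
    integral_dirac' _ _ (measurable_cellMean hf _).stronglyMeasurable]

lemma IsEquipartition.measurable_integral_empiricalLaw [IsFiniteMeasure τ]
    (hC : IsEquipartition τ C) (hf : Measurable f) (hM : ∀ z, |f z| ≤ M) :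
    Measurable fun x : Fin n → X => ∫ z, f z ∂empiricalLaw τ C x := by
  simp only [hC.integral_empiricalLaw _ hf hM]
  exact (Finset.measurable_fun_sum _ fun i _ =>
    (measurable_cellMean hf (C i)).comp (measurable_pi_apply i)).const_mul _

lemma IsEquipartition.abs_integral_empiricalLaw_le [IsFiniteMeasure τ]
    (hC : IsEquipartition τ C) (x : Fin n → X) (hf : Measurable f) (hM : ∀ z, |f z| ≤ M) :
    |∫ z, f z ∂empiricalLaw τ C x| ≤ |M| := by
  have := hC.isProbabilityMeasure_cond
  rcases eq_or_ne n 0 with rfl | hn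
  · simp [cellMixture]
  rw [hC.integral_empiricalLaw x hf hM, abs_mul, abs_inv, Nat.abs_cast,
    inv_mul_le_iff₀ (by positivity)]
  calc _ ≤ ∑ i, |cellMean τ f (C i) (x i)| := Finset.abs_sum_le_sum_abs _ _
    _ ≤ ∑ _i : Fin n, |M| := Finset.sum_le_sum fun i _ =>
        (abs_cellMean_le hM (C i) (x i)).trans (le_abs_self M)
    _ = n * |M| := by rw [Finset.sum_const, Finset.card_univ, Fintype.card_fin, nsmul_eq_mul]

lemma IsEquipartition.cellMixture_const [SFinite τ] (hC : IsEquipartition τ C) (μ : Measure X)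
    [SFinite μ] : cellMixture τ C (fun _ => μ) = τ.prod μ := by
  conv_rhs => rw [← hC.sum_restrict]
  rw [cellMixture, ← Measure.sum_fintype, ← Measure.sum_fintype, Measure.prod_sum_left]

end CellMean

section UpperBound

variable {A X : Type*} [MeasurableSpace A] [MeasurableSpace X] {τ : Measure A}
  [IsFiniteMeasure τ] {n : ℕ} {C : Fin n → Set A} {μ : Measure X} [IsProbabilityMeasure μ]
  {f : A × X → ℝ} {M : ℝ}

lemma abs_exp_sub_one_le {s t : ℝ} (h : |s| ≤ t) : |Real.exp s - 1| ≤ Real.exp t + 1 := by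
  have hle : Real.exp s ≤ Real.exp t := Real.exp_le_exp.2 ((le_abs_self _).trans h)
  rw [abs_le]
  constructor <;> linarith [Real.exp_pos s, Real.exp_pos t]

lemma integral_exp_cellMean_le (hf : Measurable f) (hM : ∀ z, |f z| ≤ M) (S : Set A)
    [IsProbabilityMeasure τ[|S]] :
    ∫ y, Real.exp (cellMean τ f S y) ∂μ ≤
      Real.exp (∫ y, cellMean τ (fun z => Real.exp (f z) - 1) S y ∂μ) := by
  have hmeas : Measurable fun z => Real.exp (f z) - 1 := (hf.exp).sub_const 1
  have hint : Integrable (cellMean τ (fun z => Real.exp (f z) - 1) S) μ :=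
    .of_bound (measurable_cellMean hmeas S).aestronglyMeasurable (Real.exp M + 1)
      (.of_forall fun y => abs_cellMean_le (fun z => abs_exp_sub_one_le (hM z)) S y)
  calc ∫ y, Real.exp (cellMean τ f S y) ∂μ
      ≤ ∫ y, (1 + cellMean τ (fun z => Real.exp (f z) - 1) S y) ∂μ :=
        integral_mono
          (integrable_exp_of_abs_le (measurable_cellMean hf S) fun y => abs_cellMean_le hM S y)
          ((integrable_const 1).add hint) fun y => exp_cellMean_le hf hM S y
    _ = ∫ y, cellMean τ (fun z => Real.exp (f z) - 1) S y ∂μ + 1 := by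
        rw [integral_add (integrable_const 1) hint, integral_const, probReal_univ, one_smul,
          add_comm]
    _ ≤ _ := Real.add_one_le_exp _

lemma IsEquipartition.mgf_klDual_le_one (hC : IsEquipartition τ C) (hn : n ≠ 0) (hf : Measurable f)
    (hM : ∀ z, |f z| ≤ M) :
    mgf (fun x : Fin n → X => klDual (τ.prod μ) f (empiricalLaw τ C x)) (.pi fun _ => μ) n ≤ 1 := by
  have hn' : (n : ℝ) ≠ 0 := Nat.cast_ne_zero.2 hn
  have := hC.isProbabilityMeasure_cond
  set J : ℝ := ∫ z, (Real.exp (f z) - 1) ∂τ.prod μ with hJ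
  have hJsum : ∑ i, ∫ y, cellMean τ (fun z => Real.exp (f z) - 1) (C i) y ∂μ = n * J := by
    rw [hJ, ← hC.cellMixture_const μ, hC.integral_cellMixture _ (hf.exp.sub_const 1)
      (fun z => abs_exp_sub_one_le (hM z)), mul_inv_cancel_left₀ hn']
  have hdual (x : Fin n → X) :
      n * klDual (τ.prod μ) f (empiricalLaw τ C x) = ∑ i, cellMean τ f (C i) (x i) - n * J := by
    rw [klDual, hC.integral_empiricalLaw x hf hM, mul_sub, mul_inv_cancel_left₀ hn']
  calc _ = (∫ x : Fin n → X, ∏ i, Real.exp (cellMean τ f (C i) (x i)) ∂.pi fun _ => μ) *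
        Real.exp (-(n * J)) := by
        simp only [mgf, hdual, sub_eq_add_neg, Real.exp_add, Real.exp_sum, integral_mul_const]
    _ = (∏ i, ∫ y, Real.exp (cellMean τ f (C i) y) ∂μ) * Real.exp (-(n * J)) := by
        rw [integral_fintype_prod_eq_prod fun i y => Real.exp (cellMean τ f (C i) y)]
    _ ≤ (∏ i, Real.exp (∫ y, cellMean τ (fun z => Real.exp (f z) - 1) (C i) y ∂μ)) *
          Real.exp (-(n * J)) := by
        refine mul_le_mul_of_nonneg_right (Finset.prod_le_prod (fun i _ => ?_) fun i _ =>
          integral_exp_cellMean_le hf hM (C i)) (Real.exp_pos _).le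
        exact integral_nonneg fun y => (Real.exp_pos _).le
    _ = 1 := by rw [← Real.exp_sum, hJsum, ← Real.exp_add, add_neg_cancel, Real.exp_zero]

theorem IsEquipartition.measure_lt_klDual_le (hC : IsEquipartition τ C) (hf : Measurable f)
    (hM : ∀ z, |f z| ≤ M) (c : ℝ) :
    Measure.pi (fun _ : Fin n => μ) {x | c < klDual (τ.prod μ) f (empiricalLaw τ C x)} ≤
      ENNReal.ofReal (Real.exp (-(n * c))) := by
  rcases eq_or_ne n 0 with rfl | hn
  · simpa using prob_le_one
  have hmeas : Measurable fun x : Fin n → X => klDual (τ.prod μ) f (empiricalLaw τ C x) :=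
    (hC.measurable_integral_empiricalLaw hf hM).sub_const _
  have hbound (x : Fin n → X) :
      |klDual (τ.prod μ) f (empiricalLaw τ C x)| ≤
        |M| + |∫ z, (Real.exp (f z) - 1) ∂τ.prod μ| :=
    (abs_sub _ _).trans (add_le_add_left (hC.abs_integral_empiricalLaw_le x hf hM) _)
  have hint : Integrable (fun x : Fin n → X => Real.exp (n *
      klDual (τ.prod μ) f (empiricalLaw τ C x))) (.pi fun _ => μ) :=
    integrable_exp_of_abs_le (hmeas.const_mul _) fun x => by
      rw [abs_mul, Nat.abs_cast]
      exact mul_le_mul_of_nonneg_left (hbound x) n.cast_nonneg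
  rw [ENNReal.le_ofReal_iff_toReal_le (measure_ne_top _ _) (Real.exp_pos _).le, ← neg_mul]
  exact (measureReal_mono fun x (hx : c < _) => hx.le).trans
    ((measure_ge_le_exp_mul_mgf c n.cast_nonneg hint).trans
      (mul_le_of_le_one_right (Real.exp_pos _).le (hC.mgf_klDual_le_one hn hf hM)))

end UpperBound

section KLProducts

variable {ι : Type*} [Fintype ι] {Z : ι → Type*} [∀ i, MeasurableSpace (Z i)]
  {p r : ∀ i, Measure (Z i)} [∀ i, IsProbabilityMeasure (p i)]

lemma pi_withDensity {h : ∀ i, Z i → ℝ≥0∞} (hh : ∀ i, Measurable (h i))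
    [∀ i, SigmaFinite ((p i).withDensity (h i))] :
    Measure.pi (fun i => (p i).withDensity (h i)) =
      (Measure.pi p).withDensity fun z => ∏ i, h i (z i) := by
  refine Measure.pi_eq fun s hs => ?_
  have hind (z : ∀ i, Z i) : (univ.pi s).indicator (fun z => ∏ i, h i (z i)) z =
      ∏ i, (s i).indicator (h i) (z i) := by
    classical
    simp only [indicator, Set.mem_univ_pi, Finset.prod_ite_zero, Finset.mem_univ, true_imp_iff]
  rw [withDensity_apply _ (.univ_pi hs), ← lintegral_indicator (.univ_pi hs)]
  simp only [hind]
  rw [lintegral_prod_eq_prod_lintegral_of_indepFun Finset.univ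
    (fun i (z : ∀ i, Z i) => (s i).indicator (h i) (z i))
    (iIndepFun_pi fun i => ((hh i).indicator (hs i)).aemeasurable)
    fun i => ((hh i).indicator (hs i)).comp (measurable_pi_apply i)]
  refine Finset.prod_congr rfl fun i _ => ?_
  rw [(measurePreserving_eval p i).lintegral_comp ((hh i).indicator (hs i)),
    lintegral_indicator (hs i), withDensity_apply _ (hs i)]

variable [∀ i, IsProbabilityMeasure (r i)]

lemma pi_eq_withDensity_prod_rnDeriv (h : ∀ i, r i ≪ p i) :
    Measure.pi r = (Measure.pi p).withDensity fun z => ∏ i, (r i).rnDeriv (p i) (z i) := by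
  have hr (i : ι) : (p i).withDensity ((r i).rnDeriv (p i)) = r i :=
    Measure.withDensity_rnDeriv_eq _ _ (h i)
  have (i : ι) : SigmaFinite ((p i).withDensity ((r i).rnDeriv (p i))) := by
    rw [hr]
    infer_instance
  simpa only [hr] using pi_withDensity (p := p) fun i => Measure.measurable_rnDeriv (r i) (p i)

lemma llr_pi_ae_eq (h : ∀ i, r i ≪ p i) :
    llr (Measure.pi r) (Measure.pi p) =ᵐ[Measure.pi r] fun z => ∑ i, llr (r i) (p i) (z i) := by
  have hac : Measure.pi r ≪ Measure.pi p := by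
    rw [pi_eq_withDensity_prod_rnDeriv h]
    exact withDensity_absolutelyContinuous _ _
  have hderiv : (Measure.pi r).rnDeriv (Measure.pi p) =ᵐ[Measure.pi p]
      fun z => ∏ i, (r i).rnDeriv (p i) (z i) := by
    conv_lhs => rw [pi_eq_withDensity_prod_rnDeriv h]
    exact Measure.rnDeriv_withDensity _ <| Finset.measurable_fun_prod _ fun i _ =>
      (Measure.measurable_rnDeriv _ _).comp (measurable_pi_apply i)
  have hpos (i : ι) : ∀ᵐ z ∂Measure.pi r, (r i).rnDeriv (p i) (z i) ≠ 0 ∧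
      (r i).rnDeriv (p i) (z i) ≠ ∞ := by
    have hri : ∀ᵐ x ∂r i, (r i).rnDeriv (p i) x ≠ 0 ∧ (r i).rnDeriv (p i) x ≠ ∞ := by
      filter_upwards [Measure.rnDeriv_pos (h i), (h i).ae_le (Measure.rnDeriv_ne_top (r i) (p i))]
        with x hx hx' using ⟨hx.ne', hx'⟩
    exact (measurePreserving_eval r i).quasiMeasurePreserving.ae hri
  filter_upwards [hac.ae_le hderiv, ae_all_iff.2 hpos] with z hz hz'
  rw [llr, hz, ENNReal.toReal_prod, Real.log_prod]
  · rfl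
  · exact fun i _ => ENNReal.toReal_ne_zero.2 (hz' i)

theorem klDiv_pi_le : klDiv (Measure.pi r) (Measure.pi p) ≤ ∑ i, klDiv (r i) (p i) := by
  by_cases htop : ∑ i, klDiv (r i) (p i) = ∞
  · exact htop ▸ le_top
  have hfin (i : ι) : klDiv (r i) (p i) ≠ ∞ := fun h =>
    htop (ENNReal.sum_eq_top.2 ⟨i, Finset.mem_univ i, h⟩)
  have hac (i : ι) : r i ≪ p i := (klDiv_ne_top_iff.1 (hfin i)).1
  have hint (i : ι) : Integrable (fun z : ∀ i, Z i => llr (r i) (p i) (z i)) (Measure.pi r) :=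
    (measurePreserving_eval r i).integrable_comp_of_integrable (klDiv_ne_top_iff.1 (hfin i)).2
  have hacpi : Measure.pi r ≪ Measure.pi p := by
    rw [pi_eq_withDensity_prod_rnDeriv hac]
    exact withDensity_absolutelyContinuous _ _
  have hintpi : Integrable (llr (Measure.pi r) (Measure.pi p)) (Measure.pi r) :=
    (integrable_congr (llr_pi_ae_eq hac)).2 (integrable_finsetSum _ fun i _ => hint i)
  refine ((ENNReal.toReal_eq_toReal_iff' (klDiv_ne_top hacpi hintpi) htop).1 ?_).le
  rw [toReal_klDiv_of_measure_eq hacpi (by simp), integral_congr_ae (llr_pi_ae_eq hac),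
    integral_finsetSum _ fun i _ => hint i, ENNReal.toReal_sum fun i _ => hfin i]
  refine Finset.sum_congr rfl fun i _ => ?_
  rw [toReal_klDiv_of_measure_eq (hac i) (by simp),
    integral_comp_eval (μ := r) (measurable_llr _ _).aestronglyMeasurable]

end KLProducts

section KLPartition

variable {α : Type*} [MeasurableSpace α] {ν ρ : Measure α} [IsFiniteMeasure ν] [IsFiniteMeasure ρ]

lemma klDiv_restrict (hac : ν ≪ ρ) {S : Set α} (hS : MeasurableSet S) :
    klDiv (ν.restrict S) (ρ.restrict S) =
      ∫⁻ x in S, ENNReal.ofReal (klFun (ν.rnDeriv ρ x).toReal) ∂ρ := by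
  rw [klDiv_eq_lintegral_klFun_of_ac (hac.restrict S)]
  have hderiv : (ν.restrict S).rnDeriv (ρ.restrict S) =ᵐ[ρ.restrict S] ν.rnDeriv ρ := by
    rw [← Measure.withDensity_rnDeriv_eq ν ρ hac, restrict_withDensity hS,
      Measure.withDensity_rnDeriv_eq ν ρ hac]
    exact Measure.rnDeriv_withDensity _ (Measure.measurable_rnDeriv ν ρ)
  exact lintegral_congr_ae <| hderiv.mono fun x hx => by simp only [hx]

lemma sum_klDiv_restrict_le {ι : Type*} [Fintype ι] {S : ι → Set α}
    (hS : ∀ i, MeasurableSet (S i)) (hdisj : Pairwise (Disjoint on S)) :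
    ∑ i, klDiv (ν.restrict (S i)) (ρ.restrict (S i)) ≤ klDiv ν ρ := by
  by_cases htop : klDiv ν ρ = ∞
  · exact htop ▸ le_top
  have hac := (klDiv_ne_top_iff.1 htop).1
  simp only [klDiv_restrict hac (hS _), klDiv_eq_lintegral_klFun_of_ac hac]
  rw [← tsum_fintype (L := .unconditional ι), ← lintegral_iUnion hS hdisj]
  exact setLIntegral_le_lintegral _ _

variable {A X : Type*} [MeasurableSpace A] [MeasurableSpace X] {τ : Measure A} {n : ℕ}
  {C : Fin n → Set A} {μ : Measure X} {ν : Measure (A × X)}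

lemma IsEquipartition.cellLaw_eq_smul (hC : IsEquipartition τ C)
    (hν : MeasurePreserving Prod.fst ν τ) (i : Fin n) :
    cellLaw ν (C i) = (n : ℝ≥0) • (ν.restrict (Prod.fst ⁻¹' C i)).map Prod.snd := by
  rw [cellLaw, ProbabilityTheory.cond, hC.measure_fst_preimage hν, inv_inv, Measure.map_smul]
  rfl

variable [IsFiniteMeasure τ] [IsFiniteMeasure ν] [IsProbabilityMeasure μ]

lemma IsEquipartition.klDiv_cellLaw_le (hC : IsEquipartition τ C)
    (hν : MeasurePreserving Prod.fst ν τ) (i : Fin n) :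
    klDiv (cellLaw ν (C i)) μ ≤ n * klDiv (ν.restrict (Prod.fst ⁻¹' C i))
      ((τ.prod μ).restrict (Prod.fst ⁻¹' C i)) := by
  have hμ : cellLaw (τ.prod μ) (C i) = μ := by
    simpa only [hC.cellMixture_const] using hC.cellLaw_cellMixture (fun _ => μ) i
  have hprod : MeasurePreserving Prod.fst (τ.prod μ) τ := measurePreserving_fst
  conv_lhs => rw [← hμ]
  rw [hC.cellLaw_eq_smul hν, hC.cellLaw_eq_smul hprod, klDiv_smul_same]
  gcongr
  · simp
  · exact klDiv_map_le _ _ measurable_snd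

theorem IsEquipartition.klDiv_pi_cellLaw_le (hC : IsEquipartition τ C)
    (hν : MeasurePreserving Prod.fst ν τ) :
    klDiv (Measure.pi fun i => cellLaw ν (C i)) (Measure.pi fun _ => μ) ≤
      n * klDiv ν (τ.prod μ) := by
  have := hC.isProbabilityMeasure_cellLaw hν
  calc klDiv (Measure.pi fun i => cellLaw ν (C i)) (Measure.pi fun _ => μ)
      ≤ ∑ i, klDiv (cellLaw ν (C i)) μ := klDiv_pi_le
    _ ≤ ∑ i, n * klDiv (ν.restrict (Prod.fst ⁻¹' C i))
          ((τ.prod μ).restrict (Prod.fst ⁻¹' C i)) :=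
        Finset.sum_le_sum fun i _ => hC.klDiv_cellLaw_le hν i
    _ ≤ n * klDiv ν (τ.prod μ) := by
        rw [← Finset.mul_sum]
        gcongr
        exact sum_klDiv_restrict_le (fun i => measurable_fst (hC.measurableSet i))
          fun i j hij => (hC.pairwise_disjoint hij).preimage Prod.fst

end KLPartition

section EntropyInequality

variable {α : Type*} [MeasurableSpace α] {K P : Measure α} [IsFiniteMeasure K] [IsFiniteMeasure P]

lemma exp_neg_div_le_measureReal (h : klDiv K P ≠ ∞) {E : Set α} (hE : MeasurableSet E)
    (hKE : 0 < K.real E) :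
    Real.exp (-(((klDiv K P).toReal + 1) / K.real E)) ≤ P.real E := by
  have hac : K ≪ P := (klDiv_ne_top_iff.1 h).1
  have hPE : 0 < P.real E := ENNReal.toReal_pos
    (fun hzero => hKE.ne' (by rw [measureReal_def, hac hzero, ENNReal.toReal_zero]))
    (measure_ne_top P E)
  set l : ℝ := -Real.log (P.real E) with hl
  have hexp (x : α) : Real.exp (E.indicator (fun _ => l) x) - 1 =
      E.indicator (fun _ => Real.exp l - 1) x := by
    by_cases hx : x ∈ E <;> simp [hx]
  have hdual : klDual P (E.indicator fun _ => l) K ≤ (klDiv K P).toReal :=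
    klDual_le_toReal_klDiv h (measurable_const.indicator hE) (M := |l|)
      fun x => by by_cases hx : x ∈ E <;> simp [hx]
  have hmass : P.real E * Real.exp l = 1 := by
    rw [hl, Real.exp_neg, Real.exp_log hPE, mul_inv_cancel₀ hPE.ne']
  simp only [klDual, hexp, integral_indicator_const _ hE, smul_eq_mul, mul_sub, hmass] at hdual
  have hle : l ≤ ((klDiv K P).toReal + 1) / K.real E := by
    rw [le_div_iff₀ hKE]
    linarith
  calc _ ≤ Real.exp (-l) := Real.exp_le_exp.2 (neg_le_neg hle)
    _ = P.real E := by rw [hl, neg_neg, Real.exp_log hPE]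

end EntropyInequality

section LowerBound

variable {A X : Type*} [MeasurableSpace A] [MeasurableSpace X] {τ : Measure A}
  [IsFiniteMeasure τ] {n : ℕ} {C : Fin n → Set A}

lemma IsEquipartition.integral_integral_empiricalLaw (hC : IsEquipartition τ C)
    (m : Fin n → Measure X) [∀ i, IsProbabilityMeasure (m i)] {f : A × X → ℝ} (hf : Measurable f)
    {M : ℝ} (hM : ∀ z, |f z| ≤ M) :
    ∫ x, ∫ z, f z ∂empiricalLaw τ C x ∂Measure.pi m = ∫ z, f z ∂cellMixture τ C m := by
  have := hC.isProbabilityMeasure_cond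
  have hint (i : Fin n) : Integrable (fun x : Fin n → X => cellMean τ f (C i) (x i))
      (Measure.pi m) :=
    .of_bound ((measurable_cellMean hf (C i)).comp (measurable_pi_apply i)).aestronglyMeasurable M
      (.of_forall fun x => abs_cellMean_le hM (C i) (x i))
  simp only [hC.integral_empiricalLaw _ hf hM]
  rw [integral_const_mul, integral_finsetSum _ fun i _ => hint i, hC.integral_cellMixture m hf hM]
  exact congrArg _ (Finset.sum_congr rfl fun i _ =>
    integral_comp_eval (μ := m) (measurable_cellMean hf (C i)).aestronglyMeasurable)

lemma IsEquipartition.variance_integral_empiricalLaw_le (hC : IsEquipartition τ C)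
    (m : Fin n → Measure X) [∀ i, IsProbabilityMeasure (m i)] {f : A × X → ℝ} (hf : Measurable f)
    {M : ℝ} (hM : ∀ z, |f z| ≤ M) :
    Var[fun x => ∫ z, f z ∂empiricalLaw τ C x; Measure.pi m] ≤ M ^ 2 / n := by
  have := hC.isProbabilityMeasure_cond
  have hmeas (i : Fin n) : Measurable (cellMean τ f (C i)) := measurable_cellMean hf (C i)
  have hsum : (fun x : Fin n → X => ∑ i, cellMean τ f (C i) (x i)) =
      ∑ i, fun x : Fin n → X => cellMean τ f (C i) (x i) := by
    ext x
    rw [Finset.sum_apply]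
  simp only [hC.integral_empiricalLaw _ hf hM]
  rw [variance_const_mul, hsum, variance_sum_pi fun i =>
    .of_bound (hmeas i).aestronglyMeasurable M (.of_forall (abs_cellMean_le hM (C i)))]
  calc _ ≤ (n : ℝ)⁻¹ ^ 2 * ∑ _i : Fin n, ((M - -M) / 2) ^ 2 := by
        gcongr with i
        exact variance_le_sq_of_bounded (.of_forall fun y => abs_le.1 (abs_cellMean_le hM (C i) y))
          (hmeas i).aemeasurable
    _ = M ^ 2 / n := by
        rcases eq_or_ne n 0 with rfl | hn
        · simp
        · rw [Finset.sum_const, Finset.card_univ, Fintype.card_fin, nsmul_eq_mul]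
          field_simp
          ring

lemma IsEquipartition.measure_le_abs_integral_sub_le (hC : IsEquipartition τ C)
    (m : Fin n → Measure X) [∀ i, IsProbabilityMeasure (m i)] {f : A × X → ℝ} (hf : Measurable f)
    {M : ℝ} (hM : ∀ z, |f z| ≤ M) {κ : ℝ} (hκ : 0 < κ) :
    Measure.pi m {x | κ ≤ |∫ z, f z ∂empiricalLaw τ C x - ∫ z, f z ∂cellMixture τ C m|} ≤
      ENNReal.ofReal (M ^ 2 / κ ^ 2 / n) := by
  have hL2 : MemLp (fun x : Fin n → X => ∫ z, f z ∂empiricalLaw τ C x) 2 (Measure.pi m) :=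
    .of_bound (hC.measurable_integral_empiricalLaw hf hM).aestronglyMeasurable |M|
      (.of_forall fun x => hC.abs_integral_empiricalLaw_le x hf hM)
  rw [← hC.integral_integral_empiricalLaw m hf hM]
  refine (meas_ge_le_variance_div_sq hL2 hκ).trans (ENNReal.ofReal_le_ofReal ?_)
  rw [div_right_comm]
  gcongr
  exact hC.variance_integral_empiricalLaw_le m hf hM

variable [TopologicalSpace A] [TopologicalSpace X] [OpensMeasurableSpace (A × X)]

/-- The samples whose empirical measure gives every test function in `s` nearly the same integral
as the mixture of the laws `m i`. -/
def typicalSamples (τ : Measure A) (C : Fin n → Set A) (m : Fin n → Measure X)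
    (s : Finset (A × X →ᵇ ℝ)) (κ : ℝ) : Set (Fin n → X) :=
  {x | ∀ f ∈ s, |∫ z, f z ∂empiricalLaw τ C x - ∫ z, f z ∂cellMixture τ C m| < κ}

lemma IsEquipartition.measurableSet_typicalSamples (hC : IsEquipartition τ C)
    (m : Fin n → Measure X) (s : Finset (A × X →ᵇ ℝ)) (κ : ℝ) :
    MeasurableSet (typicalSamples τ C m s κ) := by
  have hset : typicalSamples τ C m s κ = ⋂ f ∈ s,
      {x | |∫ z, f z ∂empiricalLaw τ C x - ∫ z, f z ∂cellMixture τ C m| < κ} := by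
    ext x
    simp [typicalSamples]
  rw [hset]
  have hmeas (f : A × X →ᵇ ℝ) := hC.measurable_integral_empiricalLaw f.continuous.measurable
    f.norm_coe_le_norm
  exact s.measurableSet_biInter fun f _ =>
    measurableSet_lt ((hmeas f).sub_const _).abs measurable_const

lemma IsEquipartition.one_sub_le_measureReal_typicalSamples (hC : IsEquipartition τ C)
    (m : Fin n → Measure X) [∀ i, IsProbabilityMeasure (m i)] (s : Finset (A × X →ᵇ ℝ)) {κ : ℝ}
    (hκ : 0 < κ) :
    1 - (∑ f ∈ s, ‖f‖ ^ 2 / κ ^ 2) / n ≤ (Measure.pi m).real (typicalSamples τ C m s κ) := by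
  have hcompl : (typicalSamples τ C m s κ)ᶜ = ⋃ f ∈ s,
      {x | κ ≤ |∫ z, f z ∂empiricalLaw τ C x - ∫ z, f z ∂cellMixture τ C m|} := by
    ext x
    simp [typicalSamples]
  have hle : (Measure.pi m).real (typicalSamples τ C m s κ)ᶜ ≤ ∑ f ∈ s, ‖f‖ ^ 2 / κ ^ 2 / n := by
    rw [hcompl]
    refine (measureReal_biUnion_finset_le _ _).trans (Finset.sum_le_sum fun f _ => ?_)
    exact ENNReal.toReal_le_of_le_ofReal (by positivity)
      (hC.measure_le_abs_integral_sub_le m f.continuous.measurable f.norm_coe_le_norm hκ)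
  rw [probReal_compl_eq_one_sub (hC.measurableSet_typicalSamples m s κ), ← Finset.sum_div] at hle
  linarith

variable {μ : Measure X} [IsProbabilityMeasure μ] {ν : Measure (A × X)} [IsFiniteMeasure ν]

theorem eventually_exp_neg_le_measureReal_typicalSamples (hν : MeasurePreserving Prod.fst ν τ)
    (s : Finset (A × X →ᵇ ℝ)) {κ : ℝ} (hκ : 0 < κ) {d : ℝ}
    (hd : klDiv ν (τ.prod μ) < ENNReal.ofReal d) :
    ∀ᶠ n : ℕ in atTop, ∀ C : Fin n → Set A, IsEquipartition τ C → Real.exp (-(n * d)) ≤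
      (Measure.pi fun _ => μ).real (typicalSamples τ C (fun i => cellLaw ν (C i)) s κ) := by
  have htop : klDiv ν (τ.prod μ) ≠ ∞ := hd.ne_top
  set D : ℝ := (klDiv ν (τ.prod μ)).toReal with hD
  have hDd : D < d := (ENNReal.lt_ofReal_iff_toReal_lt htop).1 hd
  set c : ℝ := ∑ f ∈ s, ‖f‖ ^ 2 / κ ^ 2
  filter_upwards [eventually_gt_atTop 0, tendsto_natCast_atTop_atTop.eventually_gt_atTop c,
    tendsto_natCast_atTop_atTop.eventually_ge_atTop ((1 + c * d) / (d - D))]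
    with n hn hcn hnd C hC
  rw [div_le_iff₀ (sub_pos.2 hDd)] at hnd
  have := hC.isProbabilityMeasure_cellLaw hν
  set K := Measure.pi fun i => cellLaw ν (C i)
  set E := typicalSamples τ C (fun i => cellLaw ν (C i)) s κ
  have hn' : (0 : ℝ) < n := Nat.cast_pos.2 hn
  have hKE : 1 - c / n ≤ K.real E := hC.one_sub_le_measureReal_typicalSamples _ s hκ
  have hpos : 0 < 1 - c / n := sub_pos.2 ((div_lt_one hn').2 hcn)
  have hkl : klDiv K (Measure.pi fun _ => μ) ≤ n * klDiv ν (τ.prod μ) := hC.klDiv_pi_cellLaw_le hν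
  have hkltop : (n : ℝ≥0∞) * klDiv ν (τ.prod μ) ≠ ∞ :=
    ENNReal.mul_ne_top (ENNReal.natCast_ne_top n) htop
  have hklreal : (klDiv K (Measure.pi fun _ => μ)).toReal ≤ n * D := by
    simpa [hD] using ENNReal.toReal_mono hkltop hkl
  refine le_trans (Real.exp_le_exp.2 (neg_le_neg ?_)) (exp_neg_div_le_measureReal
    (ne_top_of_le_ne_top hkltop hkl) (hC.measurableSet_typicalSamples _ s κ) (hpos.trans_le hKE))
  calc _ ≤ (n * D + 1) / (1 - c / n) := by gcongr
    _ ≤ n * d := by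
      rw [div_le_iff₀ hpos]
      have : n * d * (1 - c / n) = n * d - c * d := by field_simp
      linarith

end LowerBound

section LogAsymptotics

variable {p : ℕ → ℝ≥0∞}

lemma limsup_inv_mul_log_le {c α : ℝ} (hc : 0 < c)
    (h : ∀ᶠ n : ℕ in atTop, p n ≤ ENNReal.ofReal (c * Real.exp (-(n * α)))) :
    limsup (fun n : ℕ => ((n : ℝ)⁻¹ : ℝ) * ENNReal.log (p n)) atTop ≤ ((-α : ℝ) : EReal) := by
  have hle : ∀ᶠ n : ℕ in atTop, ((n : ℝ)⁻¹ : ℝ) * ENNReal.log (p n) ≤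
      (((n : ℝ)⁻¹ * Real.log c - α : ℝ) : EReal) := by
    filter_upwards [h, eventually_gt_atTop 0] with n hn hn0
    have hlog := ENNReal.log_le_log hn
    rw [ENNReal.log_ofReal_of_pos (by positivity), Real.log_mul hc.ne' (Real.exp_pos _).ne',
      Real.log_exp] at hlog
    refine (mul_le_mul_of_nonneg_left hlog (EReal.coe_nonneg.2 (by positivity))).trans_eq ?_
    rw [← EReal.coe_mul, EReal.coe_eq_coe_iff]
    field_simp
    ring
  have htendsto : Tendsto (fun n : ℕ => (((n : ℝ)⁻¹ * Real.log c - α : ℝ) : EReal)) atTop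
      (𝓝 ((-α : ℝ) : EReal)) := by
    have := (tendsto_inv_atTop_nhds_zero_nat (𝕜 := ℝ)).mul_const (Real.log c)
    rw [zero_mul] at this
    exact continuous_coe_real_ereal.continuousAt.tendsto.comp
      ((zero_sub α) ▸ this.sub_const α)
  exact (limsup_le_limsup hle).trans htendsto.limsup_eq.le

lemma le_liminf_inv_mul_log {d : ℝ}
    (h : ∀ᶠ n : ℕ in atTop, ENNReal.ofReal (Real.exp (-(n * d))) ≤ p n) :
    ((-d : ℝ) : EReal) ≤ liminf (fun n : ℕ => ((n : ℝ)⁻¹ : ℝ) * ENNReal.log (p n)) atTop := by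
  refine le_liminf_of_le (by isBoundedDefault) ?_
  filter_upwards [h, eventually_gt_atTop 0] with n hn hn0
  have hlog := ENNReal.log_le_log hn
  rw [ENNReal.log_ofReal_of_pos (Real.exp_pos _), Real.log_exp] at hlog
  refine le_trans (le_of_eq ?_)
    (mul_le_mul_of_nonneg_left hlog (EReal.coe_nonneg.2 (by positivity)))
  rw [← EReal.coe_mul, EReal.coe_eq_coe_iff]
  field_simp

variable {E : Type*} {I : E → ℝ≥0∞} {F : Set E}

lemma limsup_inv_mul_log_le_neg_iInf (hp : ∀ᶠ n in atTop, p n ≤ 1)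
    (h : ∀ α : ℝ, 0 ≤ α → (∀ t ∈ F, ENNReal.ofReal α < I t) → ∃ c > 0, ∀ᶠ n : ℕ in atTop,
      p n ≤ ENNReal.ofReal (c * Real.exp (-(n * α)))) :
    limsup (fun n : ℕ => ((n : ℝ)⁻¹ : ℝ) * ENNReal.log (p n)) atTop ≤
      -(⨅ t ∈ F, (I t : EReal)) := by
  rw [EReal.le_neg]
  refine EReal.ge_of_forall_gt_iff_ge.1 fun α hα => ?_
  rw [EReal.le_neg, ← EReal.coe_neg]
  rcases lt_or_ge α 0 with hα0 | hα0
  · refine (limsup_inv_mul_log_le (α := 0) one_pos (by simpa using hp)).trans ?_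
    exact EReal.coe_le_coe_iff.2 (neg_le_neg hα0.le)
  · obtain ⟨c, hc, hpc⟩ := h α hα0 fun t ht => by
      rw [← EReal.coe_ennreal_lt_coe_ennreal_iff, EReal.coe_ennreal_ofReal, max_eq_left hα0]
      exact hα.trans_le (iInf₂_le t ht)
    exact limsup_inv_mul_log_le hc hpc

lemma neg_iInf_le_liminf_inv_mul_log (h : ∀ t ∈ F, ∀ d : ℝ, I t < ENNReal.ofReal d →
      ∀ᶠ n : ℕ in atTop, ENNReal.ofReal (Real.exp (-(n * d))) ≤ p n) :
    -(⨅ t ∈ F, (I t : EReal)) ≤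
      liminf (fun n : ℕ => ((n : ℝ)⁻¹ : ℝ) * ENNReal.log (p n)) atTop := by
  rw [EReal.neg_le]
  refine le_iInf₂ fun t ht => EReal.le_of_forall_lt_iff_le.1 fun d hd => ?_
  rw [EReal.neg_le, ← EReal.coe_neg]
  refine le_liminf_inv_mul_log (h t ht d ?_)
  have hd0 : 0 ≤ d := EReal.coe_nonneg.1 ((EReal.coe_ennreal_nonneg _).trans hd.le)
  rwa [← EReal.coe_ennreal_lt_coe_ennreal_iff, EReal.coe_ennreal_ofReal, max_eq_left hd0]

end LogAsymptotics

section EdgeStatistics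

variable {X : Type*}

/-- The V-statistic of a single edge with weight `ψ`, i.e. `edgeFunctional` at the empirical
measure of the sample `x`. -/
noncomputable def edgeStat (ψ : X → X → ℝ) {n : ℕ} (Q : Fin n → Fin n → ℝ) (x : Fin n → X) : ℝ :=
  (∑ i, ∑ j, ψ (x i) (x j) * Q i j) / (n : ℝ) ^ 2

variable [MetricSpace X] [CompactSpace X] [MeasurableSpace X] [BorelSpace X]
  {μ : Measure X} [IsProbabilityMeasure μ] {Q : ∀ n : ℕ, Fin n → Fin n → ℝ}
  {C : ∀ n : ℕ, Fin n → Set ℝ} {W : ℝ → ℝ → ℝ} {ψ : X → X → ℝ}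

lemma ae_mem_Icc_unif01 : ∀ᵐ a ∂unif01, a ∈ Icc (0 : ℝ) 1 := ae_restrict_mem measurableSet_Icc

lemma IsEquipartition.edgeStat_eq {n : ℕ} {D : Fin n → Set ℝ} (hD : IsEquipartition unif01 D)
    (hψ : Continuous (Function.uncurry ψ)) (R : Fin n → Fin n → ℝ) (x : Fin n → X) :
    edgeStat ψ R x =
      edgeFunctional (cellKernel R D) ψ (empiricalLaw unif01 D x) := by
  obtain ⟨M, hM⟩ := exists_forall_abs_le_of_continuous hψ
  exact (hD.edgeFunctional_empiricalLaw x hψ.measurable hM).symm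

lemma IsEquipartition.abs_edgeStat_sub_le {n : ℕ} {D : Fin n → Set ℝ}
    (hD : IsEquipartition unif01 D) (hψ : Continuous (Function.uncurry ψ))
    {R : Fin n → Fin n → ℝ} {ε : ℝ}
    (happrox : ∀ (ν : Measure (ℝ × X)) [SFinite ν], MeasurePreserving Prod.fst ν unif01 →
      |edgeFunctional (cellKernel R D) ψ ν - edgeFunctional W ψ ν| ≤ ε)
    {s : Finset (ℝ × X →ᵇ ℝ)} {κ : ℝ}
    (hs : ∀ (ν ν' : Measure (ℝ × X)) [IsProbabilityMeasure ν] [IsProbabilityMeasure ν'],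
      MeasurePreserving Prod.fst ν unif01 → MeasurePreserving Prod.fst ν' unif01 →
      (∀ f ∈ s, |∫ z, f z ∂ν - ∫ z, f z ∂ν'| < κ) →
      |edgeFunctional W ψ ν - edgeFunctional W ψ ν'| ≤ ε)
    {ν : Measure (ℝ × X)} [IsFiniteMeasure ν] (hν : MeasurePreserving Prod.fst ν unif01)
    {x : Fin n → X} (hx : x ∈ typicalSamples unif01 D (fun i => cellLaw ν (D i)) s κ) :
    |edgeStat ψ R x - edgeFunctional W ψ ν| ≤ 4 * ε := by
  obtain ⟨M, hM⟩ := exists_forall_abs_le_of_continuous hψ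
  have := hD.isProbabilityMeasure_cellLaw hν
  set emp := empiricalLaw unif01 D x
  set bar := cellMixture unif01 D fun i => cellLaw ν (D i)
  have : IsProbabilityMeasure emp := hD.isProbabilityMeasure_cellMixture _
  have : IsProbabilityMeasure bar := hD.isProbabilityMeasure_cellMixture _
  have hemp : MeasurePreserving Prod.fst emp unif01 := hD.measurePreserving_fst_cellMixture _
  have hbar : MeasurePreserving Prod.fst bar unif01 := hD.measurePreserving_fst_cellMixture _
  have hstat : edgeStat ψ R x = edgeFunctional (cellKernel R D) ψ emp := hD.edgeStat_eq hψ R x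
  have hmean : edgeFunctional (cellKernel R D) ψ bar = edgeFunctional (cellKernel R D) ψ ν :=
    hD.edgeFunctional_cellMixture_cellLaw hν hψ.measurable hM
  calc _ = |(edgeFunctional (cellKernel R D) ψ emp - edgeFunctional W ψ emp) +
          (edgeFunctional W ψ emp - edgeFunctional W ψ bar) -
          (edgeFunctional (cellKernel R D) ψ bar - edgeFunctional W ψ bar) +
          (edgeFunctional (cellKernel R D) ψ ν - edgeFunctional W ψ ν)| := by
        rw [hstat, hmean]
        ring_nf
    _ ≤ ε + ε + ε + ε := by
        refine (abs_add_le _ _).trans (add_le_add ((abs_sub _ _).trans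
          (add_le_add ((abs_add_le _ _).trans (add_le_add ?_ ?_)) ?_)) ?_)
        exacts [happrox emp hemp, hs emp bar hemp hbar hx, happrox bar hbar, happrox ν hν]
    _ = 4 * ε := by ring

theorem IsCellApproximation.exists_measure_edgeStat_le (h : IsCellApproximation Q C W ψ)
    (hW : Integrable (Function.uncurry W) (unif01.prod unif01))
    (hψ : Continuous (Function.uncurry ψ)) {F : Set ℝ} {α : ℝ} (hα : 0 ≤ α)
    (hF : ∀ t ∈ closure F, ENNReal.ofReal α <
      contractedRate (unif01.prod μ) (lawsWithFst X unif01) (edgeFunctional W ψ) t) :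
    ∃ c > 0, ∀ᶠ n : ℕ in atTop, Measure.pi (fun _ => μ) {x | edgeStat ψ (Q n) x ∈ F} ≤
      ENNReal.ofReal (c * Real.exp (-(n * α))) := by
  obtain ⟨s, δ, hδ, hnear⟩ := exists_finset_lt_klDual_of_near
    (isCompact_lawsWithFst isCompact_Icc ae_mem_Icc_unif01)
    (continuousOn_edgeFunctional isCompact_Icc ae_mem_Icc_unif01 hW hψ) isClosed_closure hα hF
  refine ⟨s.card + 1, by positivity, ?_⟩
  filter_upwards [h.isEquipartition, h.abs_sub_le (δ / 2) (half_pos hδ)] with n hC hclose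
  have hsub : {x | edgeStat ψ (Q n) x ∈ F} ⊆ ⋃ f ∈ s, {x | α <
      klDual (unif01.prod μ) f (empiricalLaw unif01 (C n) x)} := by
    intro x hx
    have hfst := hC.measurePreserving_fst_cellMixture fun i => Measure.dirac (x i)
    have := hC.isProbabilityMeasure_cellMixture fun i => Measure.dirac (x i)
    have hle := hclose _ hfst
    rw [← hC.edgeStat_eq hψ] at hle
    obtain ⟨f, hf, hlt⟩ := hnear ⟨_, this⟩ hfst _ (subset_closure hx)
      (hle.trans_lt (half_lt_self hδ))
    exact mem_iUnion₂.2 ⟨f, hf, hlt⟩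
  calc _ ≤ ∑ _f ∈ s, ENNReal.ofReal (Real.exp (-(n * α))) :=
        (measure_mono hsub).trans ((measure_biUnion_finset_le _ _).trans (Finset.sum_le_sum
          fun f _ => hC.measure_lt_klDual_le f.continuous.measurable f.norm_coe_le_norm α))
    _ = ENNReal.ofReal (s.card * Real.exp (-(n * α))) := by
        rw [Finset.sum_const, nsmul_eq_mul, ENNReal.ofReal_mul (by positivity),
          ENNReal.ofReal_natCast]
    _ ≤ _ := by gcongr; linarith

theorem IsCellApproximation.eventually_exp_neg_le_measure_edgeStat
    (h : IsCellApproximation Q C W ψ) (hW : Integrable (Function.uncurry W) (unif01.prod unif01))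
    (hψ : Continuous (Function.uncurry ψ)) {F : Set ℝ} {t d : ℝ} (ht : t ∈ interior F)
    (hd : contractedRate (unif01.prod μ) (lawsWithFst X unif01) (edgeFunctional W ψ) t <
      ENNReal.ofReal d) :
    ∀ᶠ n : ℕ in atTop, ENNReal.ofReal (Real.exp (-(n * d))) ≤
      Measure.pi (fun _ => μ) {x | edgeStat ψ (Q n) x ∈ F} := by
  simp only [contractedRate, iInf_lt_iff] at hd
  obtain ⟨ν, ⟨hν, rfl⟩, hd⟩ := hd
  obtain ⟨ε, hε, hball⟩ := Metric.mem_nhds_iff.1 (mem_interior_iff_mem_nhds.1 ht)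
  obtain ⟨s, κ, hκ, hs⟩ := exists_forall_abs_edgeFunctional_sub_le (X := X) isCompact_Icc
    ae_mem_Icc_unif01 hW hψ (show 0 < ε / 5 by positivity)
  filter_upwards [h.isEquipartition, h.abs_sub_le (ε / 5) (by positivity),
    eventually_exp_neg_le_measureReal_typicalSamples hν s hκ hd] with n hC hclose htypical
  have hsub : typicalSamples unif01 (C n) (fun i => cellLaw ν (C n i)) s κ ⊆
      {x | edgeStat ψ (Q n) x ∈ F} := by
    intro x hx
    exact hball (Metric.mem_ball.2 ((hC.abs_edgeStat_sub_le hψ hclose hs hν hx).trans_lt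
      (by linarith)))
  calc _ ≤ ENNReal.ofReal ((Measure.pi fun _ => μ).real (typicalSamples unif01 (C n)
        (fun i => cellLaw ν (C n i)) s κ)) := ENNReal.ofReal_le_ofReal (htypical _ hC)
    _ ≤ _ := by
      rw [ofReal_measureReal]
      exact measure_mono hsub

theorem IsCellApproximation.satisfiesLDP_edgeStat (h : IsCellApproximation Q C W ψ)
    (hW : Integrable (Function.uncurry W) (unif01.prod unif01))
    (hψ : Continuous (Function.uncurry ψ)) :
    SatisfiesLDP (fun n => Measure.pi fun _ : Fin n => μ) (fun n x => edgeStat ψ (Q n) x)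
      (contractedRate (unif01.prod μ) (lawsWithFst X unif01) (edgeFunctional W ψ)) := by
  refine ⟨fun c hc => isCompact_setOf_contractedRate_le
    (isCompact_lawsWithFst isCompact_Icc ae_mem_Icc_unif01)
    (continuousOn_edgeFunctional isCompact_Icc ae_mem_Icc_unif01 hW hψ) hc, fun F _ => ⟨?_, ?_⟩⟩
  · exact neg_iInf_le_liminf_inv_mul_log fun t ht d hd =>
      h.eventually_exp_neg_le_measure_edgeStat hW hψ ht hd
  · exact limsup_inv_mul_log_le_neg_iInf (.of_forall fun n => prob_le_one) fun α hα hF =>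
      h.exists_measure_edgeStat_le hW hψ hα hF

end EdgeStatistics

section SingleEdge

variable {X : Type*} {G : SimpleGraph (Fin 2)} [DecidableRel G.Adj] {n : ℕ}
  {Q : Fin n → Fin n → ℝ}

lemma edgeProd_eq (hG : ∀ a b : Fin 2, G.Adj a b ↔ a ≠ b) (f : Fin 2 → Fin 2 → ℝ) :
    edgeProd G f = f 0 1 := by
  have hedge : Finset.univ.filter (fun p : Fin 2 × Fin 2 => G.Adj p.1 p.2 ∧ p.1 < p.2) =
      {(0, 1)} := by
    simp only [hG]
    decide
  rw [edgeProd, hedge, Finset.prod_singleton]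

lemma vec_comp_eq {Y : Type*} (x : Y → X) (i : Fin 2 → Y) : x ∘ i = ![x (i 0), x (i 1)] := by
  ext a
  fin_cases a <;> rfl

lemma Vstat_eq_edgeStat (hG : ∀ a b : Fin 2, G.Adj a b ↔ a ≠ b) (φ : (Fin 2 → X) → ℝ)
    (x : Fin n → X) : Vstat G φ n Q x = edgeStat (fun y y' => φ ![y, y']) Q x := by
  simp only [Vstat, edgeStat, edgeProd_eq hG, vec_comp_eq x]
  rw [← Fintype.sum_prod_type' (f := fun i j => φ ![x i, x j] * Q i j)]
  exact congrArg (· / _) (Fintype.sum_equiv (finTwoArrowEquiv _) _ _ fun i => rfl)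

lemma Ustat_eq_Vstat (hG : ∀ a b : Fin 2, G.Adj a b ↔ a ≠ b) (φ : (Fin 2 → X) → ℝ)
    (hQ : ∀ i, Q i i = 0) (x : Fin n → X) : Ustat G φ n Q x = Vstat G φ n Q x := by
  refine congrArg (· / _) (Finset.sum_subset (Finset.filter_subset _ _) fun i _ hi => ?_)
  have hdiag : i 0 = i 1 := by
    by_contra hne
    exact hi (Finset.mem_filter.2 ⟨Finset.mem_univ i, fun a b hab => by
      fin_cases a <;> fin_cases b <;> simp_all⟩)
  rw [edgeProd_eq hG, hdiag, hQ, mul_zero]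

variable [MeasurableSpace X]

lemma TWphi_eq_edgeFunctional (hG : ∀ a b : Fin 2, G.Adj a b ↔ a ≠ b) (W : ℝ → ℝ → ℝ)
    (φ : (Fin 2 → X) → ℝ) (ν : Measure (ℝ × X)) [IsProbabilityMeasure ν] :
    TWphi G W φ ν = edgeFunctional W (fun y y' => φ ![y, y']) ν := by
  have hν : probOr ν = ν := if_pos ‹IsProbabilityMeasure ν›
  rw [TWphi, edgeFunctional, piProb, hν, ← (measurePreserving_piFinTwo fun _ => ν).integral_comp
    (MeasurableEquiv.piFinTwo _).measurableEmbedding]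
  refine integral_congr_ae (.of_forall fun z => ?_)
  exact congrArg₂ (· * ·) (congrArg φ (vec_comp_eq Prod.snd z)) (edgeProd_eq hG _)

lemma KLdiv_eq_klDiv {α : Type*} [MeasurableSpace α] (ν ρ : Measure α) [IsProbabilityMeasure ν]
    [IsProbabilityMeasure ρ] : KLdiv ν ρ = klDiv ν ρ := by
  simp only [KLdiv, klDiv_def, probReal_univ, add_sub_cancel_right]

lemma rate0_eq_contractedRate (hG : ∀ a b : Fin 2, G.Adj a b ↔ a ≠ b) (W : ℝ → ℝ → ℝ)
    (φ : (Fin 2 → X) → ℝ) (μ : Measure X) [IsProbabilityMeasure μ] :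
    rate0 G W φ μ = contractedRate (unif01.prod μ) (lawsWithFst X unif01)
      (edgeFunctional W fun y y' => φ ![y, y']) := by
  ext1 t
  refine le_antisymm (le_iInf₂ fun ν ⟨hν, hT⟩ => ?_) (le_iInf fun ⟨ν, ⟨hprob, hfst⟩, _, hT⟩ => ?_)
  · rw [← TWphi_eq_edgeFunctional hG] at hT
    by_cases htop : klDiv (ν : Measure (ℝ × X)) (unif01.prod μ) = ∞
    · exact htop ▸ le_top
    · rw [← KLdiv_eq_klDiv] at htop ⊢
      exact iInf_le_of_le ⟨ν, ⟨inferInstance, hν.map_eq⟩, htop, hT⟩ le_rfl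
  · rw [KLdiv_eq_klDiv]
    rw [TWphi_eq_edgeFunctional hG] at hT
    exact iInf₂_le (⟨ν, hprob⟩ : ProbabilityMeasure (ℝ × X)) ⟨⟨measurable_fst, hfst⟩, hT⟩

end SingleEdge

theorem satisfiesLDP_Vstat {X : Type*} [MetricSpace X] [CompactSpace X] [MeasurableSpace X]
    [BorelSpace X] (μ : Measure X) [IsProbabilityMeasure μ] {G : SimpleGraph (Fin 2)}
    [DecidableRel G.Adj] (hG : ∀ a b : Fin 2, G.Adj a b ↔ a ≠ b) {φ : (Fin 2 → X) → ℝ}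
    (hφ : Continuous φ) (Q : ∀ n : ℕ, Fin n → Fin n → ℝ) {W : ℝ → ℝ → ℝ}
    (hW : Measurable (Function.uncurry W))
    (hcut : Tendsto (fun n => weakCutDist (stepKernel n (Q n)) W) atTop (𝓝 0))
    (hnorm : limsup (fun n => kerNorm (stepKernel n (Q n)) 1) atTop ≠ ∞)
    (hW1 : kerNorm W 1 ≠ ∞) :
    SatisfiesLDP (fun n => Measure.pi fun _ : Fin n => μ) (fun n x => Vstat G φ n (Q n) x)
      (rate0 G W φ μ) := by
  have hψ : Continuous (Function.uncurry fun y y' => φ ![y, y']) := by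
    unfold Function.uncurry
    fun_prop
  obtain ⟨C, hC⟩ := exists_isCellApproximation Q hW hW1 hcut hnorm hψ
  simp only [Vstat_eq_edgeStat hG, rate0_eq_contractedRate hG]
  exact hC.satisfiesLDP_edgeStat (integrable_of_kerNorm_ne_top hW hW1) hψ

end EdgeLDP

theorem ldp_inhomogeneous_U_V_statistics_edge_general
    {X : Type*} [MetricSpace X] [CompactSpace X] [MeasurableSpace X] [BorelSpace X]
    (μ : Measure X) [IsProbabilityMeasure μ]
    (G : SimpleGraph (Fin 2)) [DecidableRel G.Adj]
    (hK2 : ∀ a b : Fin 2, G.Adj a b ↔ a ≠ b)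
    (φ : (Fin 2 → X) → ℝ) (hφ : Continuous φ)
    (Q : ∀ n : ℕ, Fin n → Fin n → ℝ) (hQzero : ∀ n i, Q n i i = 0)
    (W : ℝ → ℝ → ℝ) (hWmeas : Measurable (Function.uncurry W))
    (hcut : Tendsto (fun n => weakCutDist (stepKernel n (Q n)) W) atTop (𝓝 0))
    (hnorm : limsup (fun n => kerNorm (stepKernel n (Q n)) 1) atTop ≠ ⊤)
    (hWL1 : kerNorm W 1 ≠ ⊤) :
    SatisfiesLDP (fun n => Measure.pi fun _ : Fin n => μ)
      (fun n x => Ustat G φ n (Q n) x) (rate0 G W φ μ) ∧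
    SatisfiesLDP (fun n => Measure.pi fun _ : Fin n => μ)
      (fun n x => Vstat G φ n (Q n) x) (rate0 G W φ μ) := by
  have hV := EdgeLDP.satisfiesLDP_Vstat μ hK2 hφ Q hWmeas hcut hnorm hWL1
  refine ⟨?_, hV⟩
  simpa only [EdgeLDP.Ustat_eq_Vstat hK2 φ (hQzero _)] using hV

/-- Theorem 1.2 (i): the edge case `H = K₂`. -/
theorem ldp_inhomogeneous_U_V_statistics_edge
    {X : Type*} [MetricSpace X] [CompactSpace X] [MeasurableSpace X] [BorelSpace X]
    (μ : Measure X) [IsProbabilityMeasure μ]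
    (hnondeg : ∀ x : X, μ ≠ Measure.dirac x)
    (G : SimpleGraph (Fin 2)) [DecidableRel G.Adj]
    (hK2 : ∀ a b : Fin 2, G.Adj a b ↔ a ≠ b)
    (φ : (Fin 2 → X) → ℝ) (hφ : Continuous φ)
    (Q : ∀ n : ℕ, Fin n → Fin n → ℝ)
    (hQsymm : ∀ n i j, Q n i j = Q n j i) (hQzero : ∀ n i, Q n i i = 0)
    (W : ℝ → ℝ → ℝ) (hWmeas : Measurable (Function.uncurry W))
    (hWsymm : ∀ x y, W x y = W y x)
    (hcut : Tendsto (fun n => weakCutDist (stepKernel n (Q n)) W) atTop (nhds 0))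
    (hnorm : Filter.atTop.limsup (fun n => kerNorm (stepKernel n (Q n)) 1) ≠ ⊤)
    (hWL1 : kerNorm W 1 ≠ ⊤) :
    SatisfiesLDP (fun n => Measure.pi fun _ : Fin n => μ)
      (fun n x => Ustat G φ n (Q n) x) (rate0 G W φ μ) ∧
    SatisfiesLDP (fun n => Measure.pi fun _ : Fin n => μ)
      (fun n x => Vstat G φ n (Q n) x) (rate0 G W φ μ) := by
  exact ldp_inhomogeneous_U_V_statistics_edge_general μ G hK2 φ hφ Q hQzero W hWmeas hcut hnorm hWL1
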